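/- Let n ≥ 2, let 1 ≤ k ≤ n−1, and let f₁, f₂ ∈ Q₀ⁿ. Assume the Shephard condition: ‖P_H f₁‖_{L¹(H)} ≤ ‖P_H f₂‖_{L¹(H)} for every k-dimensional linear subspace H ⊆ ℝⁿ. Then ‖f₁‖₁^{k/n} · ‖f₁‖_∞^{(n−k)/n} ≤ (16·e·√n)^{n−k} · ‖f₂‖₁^{k/n} · ‖f₂‖_∞^{(n−k)/n}. -/

import Mathlib

open MeasureTheory

noncomputable section

/-- `ℝⁿ` with its Euclidean structure. -/
abbrev Eucl (n : ℕ) := EuclideanSpace ℝ (Fin n)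

/-- `f : ℝⁿ → [0,∞)` is log-concave:
`f(tx+(1−t)y) ≥ f(x)^t · f(y)^(1−t)` for all `x, y` and `t ∈ (0,1)`. -/
def IsLogConcave {n : ℕ} (f : Eucl n → ℝ) : Prop :=
  ∀ x y : Eucl n, ∀ t : ℝ, 0 < t → t < 1 →
    f x ^ t * f y ^ (1 - t) ≤ f (t • x + (1 - t) • y)

/-- The class `Q₀ⁿ`: nonnegative, log-concave, upper semicontinuous, integrable
functions with positive integral. -/
def MemQ0 {n : ℕ} (f : Eucl n → ℝ) : Prop :=
  (∀ x, 0 ≤ f x) ∧ IsLogConcave f ∧ UpperSemicontinuous f ∧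
    Integrable f ∧ 0 < ∫ x, f x

/-- `‖f‖_∞ = sup f`. -/
def supNorm {n : ℕ} (f : Eucl n → ℝ) : ℝ := ⨆ x, f x

/-- `‖f‖_p = (∫ f^p)^(1/p)`. -/
def lpNorm {n : ℕ} (p : ℝ) (f : Eucl n → ℝ) : ℝ := (∫ x, f x ^ p) ^ (1 / p)

/-- `‖P_H f‖_{L¹(H)} = ∫_H sup_{z ∈ H⊥} f(y+z) dλ_H(y)`, the `L¹(H)`-norm of the
projection of `f` onto the subspace `H` (with the Lebesgue measure on `H` induced
by the Euclidean structure). -/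
def projL1 {n : ℕ} (f : Eucl n → ℝ) (H : Submodule ℝ (Eucl n)) : ℝ :=
  ∫ y : H, ⨆ z : Hᗮ, f ((y : Eucl n) + (z : Eucl n))

/-- `‖S_H f‖_{L¹(H)} = ∫_H f dλ_H`, the integral of the section `f|_H`. -/
def sectL1 {n : ℕ} (f : Eucl n → ℝ) (H : Submodule ℝ (Eucl n)) : ℝ :=
  ∫ y : H, f (y : Eucl n)

/-!
Both sides are compared with the geometric mean of the `L¹`-norms of the projections onto the
`k`-dimensional coordinate subspaces of an orthonormal basis `u`, which is monotone under the
Shephard condition.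

For every `u`, the Loomis–Whitney inequality bounds `∫ f₁ ^ (n / k)` by a power of this mean, and
log-concavity, applied to contractions towards a maximum point, bounds `∫ f₁` and `‖f₁‖_∞` by
`∫ f₁ ^ (n / k)` at the cost of the factor `(n / k) ^ k`.

For a suitable `u` there is a reverse bound for `f₂`. The superlevel set `{f₂ ≥ 4⁻ⁿ ‖f₂‖_∞}`
has volume at least a constant times `∫ f₂ / ‖f₂‖_∞`, and by John's theorem a translate of it
contains a symmetric box, with axes along `u`, of comparable volume. Log-concavity then bounds the
growth of the integral when `f₂` is replaced by its suprema over translates of `t` times the box.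
Expanding at `t = 0`, one coordinate at a time, bounds the sum of the projection integrals, weighted
by the volumes of the faces of the box, by `∫ f₂`, and AM–GM turns this sum into the geometric mean.
-/

open scoped ENNReal Pointwise

/-! ### Suprema over translates -/

section TranslateSup

/-- The largest value of `g` on `x + B`, that is, the sup-convolution of `g` with the indicator
of `-B`. It turns a set of admissible displacements into an operation on functions. -/
def translateSup {E : Type*} [Add E] (B : Set E) (g : E → ℝ≥0∞) (x : E) : ℝ≥0∞ :=
  ⨆ q ∈ B, g (x + q)

variable {E : Type*} {B C D : Set E} {g h : E → ℝ≥0∞}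

lemma le_translateSup [Add E] {q : E} (hq : q ∈ B) (x : E) : g (x + q) ≤ translateSup B g x :=
  le_iSup₂ (f := fun q (_ : q ∈ B) => g (x + q)) q hq

lemma self_le_translateSup [AddZeroClass E] (h0 : (0 : E) ∈ B) (x : E) :
    g x ≤ translateSup B g x := by
  simpa using le_translateSup (g := g) h0 x

lemma translateSup_mono_set [Add E] (hBC : B ⊆ C) (x : E) :
    translateSup B g x ≤ translateSup C g x :=
  biSup_mono hBC

lemma translateSup_translateSup_le [AddSemigroup E] (hBCD : B + C ⊆ D) (x : E) :
    translateSup B (translateSup C g) x ≤ translateSup D g x := by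
  refine iSup₂_le fun q hq => iSup₂_le fun r hr => ?_
  rw [add_assoc]
  exact le_translateSup (hBCD (Set.add_mem_add hq hr)) x

lemma lowerSemicontinuous_translateSup [AddGroup E] [TopologicalSpace E] [ContinuousAdd E]
    (hg : LowerSemicontinuous g) : LowerSemicontinuous (translateSup B g) :=
  lowerSemicontinuous_biSup fun q _ => hg.comp (continuous_add_const q)

lemma lowerSemicontinuous_translateSup_of_isOpen [AddCommGroup E] [TopologicalSpace E]
    [IsTopologicalAddGroup E] (hB : IsOpen B) : LowerSemicontinuous (translateSup B g) := by
  rw [lowerSemicontinuous_iff_isOpen_preimage]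
  intro y
  have hpre : translateSup B g ⁻¹' Set.Ioi y = ⋃ z ∈ {z | y < g z}, (fun x => z - x) ⁻¹' B := by
    ext x
    simp only [translateSup, Set.mem_preimage, Set.mem_Ioi, lt_iSup_iff, Set.mem_iUnion,
      Set.mem_ofPred_eq, exists_prop]
    constructor
    · rintro ⟨q, hq, hlt⟩
      exact ⟨x + q, hlt, by simpa using hq⟩
    · rintro ⟨z, hlt, hz⟩
      exact ⟨z - x, hz, by simpa using hlt⟩
  rw [hpre]
  exact isOpen_biUnion fun z _ => hB.preimage (continuous_const.sub continuous_id)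

lemma setLIntegral_Iio_le_translateSup {c : ℝ} (hc : 0 ≤ c) (g : ℝ → ℝ≥0∞) (p : ℝ) :
    ∫⁻ x in Set.Iio p, g x ≤ ∫⁻ x in Set.Iio (p - c), translateSup (Set.Icc (-c) c) g x := by
  have hshift : ∫⁻ x in Set.Iio p, g x = ∫⁻ x in Set.Iio (p - c), g (x + c) := by
    rw [← lintegral_indicator measurableSet_Iio, ← lintegral_indicator measurableSet_Iio,
      ← lintegral_add_right_eq_self _ c]
    simp only [Set.indicator, Set.mem_Iio, lt_sub_iff_add_lt]
  have hmem : c ∈ Set.Icc (-c) c := ⟨by linarith, le_rfl⟩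
  rw [hshift]
  exact lintegral_mono fun x => le_translateSup hmem x

lemma setLIntegral_Ici_le_translateSup {c : ℝ} (hc : 0 ≤ c) (g : ℝ → ℝ≥0∞) (p : ℝ) :
    ∫⁻ x in Set.Ici p, g x ≤ ∫⁻ x in Set.Ici (p + c), translateSup (Set.Icc (-c) c) g x := by
  have hshift : ∫⁻ x in Set.Ici p, g x = ∫⁻ x in Set.Ici (p + c), g (x + -c) := by
    rw [← lintegral_indicator measurableSet_Ici, ← lintegral_indicator measurableSet_Ici,
      ← lintegral_add_right_eq_self _ (-c)]
    simp only [Set.indicator, Set.mem_Ici, ← sub_eq_add_neg, le_sub_iff_add_le]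
  have hmem : -c ∈ Set.Icc (-c) c := ⟨le_rfl, by linarith⟩
  rw [hshift]
  exact lintegral_mono fun x => le_translateSup hmem x

lemma mul_le_setLIntegral_Ico_translateSup (c : ℝ) (g : ℝ → ℝ≥0∞) (p : ℝ) :
    ENNReal.ofReal (2 * c) * g p ≤
      ∫⁻ x in Set.Ico (p - c) (p + c), translateSup (Set.Icc (-c) c) g x := by
  calc ENNReal.ofReal (2 * c) * g p = ∫⁻ _ in Set.Ico (p - c) (p + c), g p := by
        rw [setLIntegral_const, Real.volume_Ico, mul_comm]
        congr 2
        ring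
    _ ≤ _ := by
        refine setLIntegral_mono' measurableSet_Ico fun x hx => ?_
        have hmem : p - x ∈ Set.Icc (-c) c := ⟨by linarith [hx.2], by linarith [hx.1]⟩
        simpa using le_translateSup (g := g) hmem x

/- Cut the line at a near-maximum `p` of `g`, push the two halves apart by `c`, and fill the gap
of length `2 * c` with the value `g p`. -/
lemma lintegral_add_mul_iSup_le_lintegral_translateSup (g : ℝ → ℝ≥0∞) {c : ℝ} (hc : 0 ≤ c) :
    (∫⁻ x, g x) + ENNReal.ofReal (2 * c) * (⨆ p, g p) ≤
      ∫⁻ x, translateSup (Set.Icc (-c) c) g x := by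
  rw [ENNReal.mul_iSup, ENNReal.add_iSup]
  refine iSup_le fun p => ?_
  set A := translateSup (Set.Icc (-c) c) g
  have hdisj : Disjoint (Set.Ico (p - c) (p + c)) (Set.Ici (p + c)) :=
    Set.disjoint_left.2 fun x hx hx' => hx.2.not_ge hx'
  calc (∫⁻ x, g x) + ENNReal.ofReal (2 * c) * g p
      = (∫⁻ x in Set.Iio p, g x) +
          (ENNReal.ofReal (2 * c) * g p + ∫⁻ x in Set.Ici p, g x) := by
        rw [← lintegral_add_compl g (measurableSet_Iio (a := p)), Set.compl_Iio]
        ring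
    _ ≤ (∫⁻ x in Set.Iio (p - c), A x) +
          ((∫⁻ x in Set.Ico (p - c) (p + c), A x) + ∫⁻ x in Set.Ici (p + c), A x) :=
        add_le_add (setLIntegral_Iio_le_translateSup hc g p)
          (add_le_add (mul_le_setLIntegral_Ico_translateSup c g p)
            (setLIntegral_Ici_le_translateSup hc g p))
    _ = ∫⁻ x, A x := by
        rw [← lintegral_union measurableSet_Ici hdisj,
          Set.Ico_union_Ici_eq_Ici (show p - c ≤ p + c by linarith), ← Set.compl_Iio,
          lintegral_add_compl A measurableSet_Iio]

end TranslateSup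

/-! ### Coordinate projections of functions -/

section CoordProj

variable {ι : Type*} [DecidableEq ι]

/-- The projection of `g` onto the coordinate subspace `ℝ^S`: the supremum of `g` over the
coordinates outside `S`. It is encoded as a function on the whole space which only depends on
the coordinates in `S`. -/
def coordProj (S : Finset ι) (g : (ι → ℝ) → ℝ≥0∞) (x : ι → ℝ) : ℝ≥0∞ :=
  ⨆ z : ι → ℝ, g (S.piecewise x z)

variable {g h : (ι → ℝ) → ℝ≥0∞}

lemma le_coordProj (S : Finset ι) (g : (ι → ℝ) → ℝ≥0∞) (x z : ι → ℝ) :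
    g (S.piecewise x z) ≤ coordProj S g x :=
  le_iSup (fun z => g (S.piecewise x z)) z

lemma coordProj_mono (S : Finset ι) (hgh : g ≤ h) : coordProj S g ≤ coordProj S h :=
  fun _ => iSup_mono fun _ => hgh _

lemma coordProj_congr {S : Finset ι} {x y : ι → ℝ} (hxy : ∀ i ∈ S, x i = y i) :
    coordProj S g x = coordProj S g y := by
  simp only [coordProj, S.piecewise_congr hxy fun _ _ => rfl]

lemma self_le_coordProj (S : Finset ι) (g : (ι → ℝ) → ℝ≥0∞) (x : ι → ℝ) :
    g x ≤ coordProj S g x := by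
  simpa only [Finset.piecewise_same] using le_coordProj S g x x

lemma coordProj_updateFinset_restrict (S : Finset ι) (g : (ι → ℝ) → ℝ≥0∞) (w x : ι → ℝ) :
    coordProj S g (Function.updateFinset w S (S.restrict x)) = coordProj S g x :=
  coordProj_congr fun i hi => by simp [Function.updateFinset, hi]

lemma coordProj_univ [Fintype ι] (g : (ι → ℝ) → ℝ≥0∞) : coordProj Finset.univ g = g := by
  ext x
  simp [coordProj]

lemma coordProj_coordProj (S T : Finset ι) (g : (ι → ℝ) → ℝ≥0∞) :
    coordProj S (coordProj T g) = coordProj (S ∩ T) g := by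
  ext x
  refine le_antisymm (iSup_le fun z => iSup_le fun w => ?_) (iSup_le fun z => ?_)
  · have heq : T.piecewise (S.piecewise x z) w = (S ∩ T).piecewise x (T.piecewise z w) := by
      ext i
      by_cases hS : i ∈ S <;> by_cases hT : i ∈ T <;> simp [hS, hT]
    rw [heq]
    exact le_coordProj (S ∩ T) g x _
  · have heq : (S ∩ T).piecewise x z = T.piecewise (S.piecewise x z) z := by
      ext i
      by_cases hS : i ∈ S <;> by_cases hT : i ∈ T <;> simp [hS, hT]
    rw [heq]
    exact (le_coordProj T g _ z).trans (le_coordProj S (coordProj T g) x z)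

lemma coordProj_compl_singleton [Fintype ι] (i : ι) (g : (ι → ℝ) → ℝ≥0∞) (x : ι → ℝ) :
    coordProj {i}ᶜ g x = ⨆ t : ℝ, g (Function.update x i t) := by
  refine le_antisymm (iSup_le fun z => ?_) (iSup_le fun t => ?_)
  · rw [Finset.piecewise_compl, Finset.piecewise_singleton]
    exact le_iSup (fun t : ℝ => g (Function.update x i t)) (z i)
  · have h := le_coordProj {i}ᶜ g x fun _ => t
    rwa [Finset.piecewise_compl, Finset.piecewise_singleton] at h

lemma lowerSemicontinuous_coordProj (S : Finset ι) (hg : LowerSemicontinuous g) :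
    LowerSemicontinuous (coordProj S g) := by
  refine lowerSemicontinuous_iSup fun z => hg.comp (continuous_pi fun i => ?_)
  by_cases hi : i ∈ S <;> simp only [hi, Finset.piecewise_eq_of_mem, not_false_eq_true,
    Finset.piecewise_eq_of_notMem] <;> fun_prop

/-- The `L¹`-norm over `ℝ^S` of the coordinate projection of `g`. Integration over the coordinates
in `S` is expressed by `lmarginal`, whose base point is irrelevant, see `lmarginal_coordProj`. -/
def projIntegral (S : Finset ι) (g : (ι → ℝ) → ℝ≥0∞) : ℝ≥0∞ :=
  lmarginal (fun _ => volume) S (coordProj S g) 0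

lemma lmarginal_coordProj (S : Finset ι) (g : (ι → ℝ) → ℝ≥0∞) (x : ι → ℝ) :
    lmarginal (fun _ => volume) S (coordProj S g) x = projIntegral S g := by
  refine lintegral_congr fun y => coordProj_congr fun i hi => ?_
  simp [Function.updateFinset, hi]

lemma projIntegral_eq_lintegral (S : Finset ι) (g : (ι → ℝ) → ℝ≥0∞) :
    projIntegral S g = ∫⁻ y : S → ℝ, coordProj S g (Function.updateFinset 0 S y) :=
  rfl

lemma projIntegral_mono (S : Finset ι) (hgh : g ≤ h) : projIntegral S g ≤ projIntegral S h :=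
  lmarginal_mono (coordProj_mono S hgh) 0

lemma projIntegral_univ [Fintype ι] (g : (ι → ℝ) → ℝ≥0∞) :
    projIntegral Finset.univ g = ∫⁻ x, g x := by
  rw [projIntegral, coordProj_univ, lmarginal_univ, volume_pi]

end CoordProj

section BoxTranslates

variable {ι : Type*} [DecidableEq ι] {g : (ι → ℝ) → ℝ≥0∞}

lemma translateSup_update_le (i : ι) (c t : ℝ) (g : (ι → ℝ) → ℝ≥0∞) (x : ι → ℝ) :
    translateSup (Set.Icc (-c) c) (fun s => g (Function.update x i s)) t ≤
      translateSup (Set.Icc (-Pi.single i c) (Pi.single i c)) g (Function.update x i t) := by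
  refine iSup₂_le fun q hq => ?_
  have hmem : Pi.single i q ∈ Set.Icc (-Pi.single i c : ι → ℝ) (Pi.single i c) := by
    rw [← Pi.single_neg]
    exact ⟨Pi.single_le_single.2 hq.1, Pi.single_le_single.2 hq.2⟩
  have heq : Function.update x i (t + q) = Function.update x i t + Pi.single i q := by
    rw [Pi.single, ← Function.update_add, add_zero]
  beta_reduce
  rw [heq]
  exact le_translateSup hmem _

variable [Fintype ι]

lemma lmarginal_add_mul_lmarginal_erase_le {S : Finset ι} {i : ι} (hi : i ∈ S) {c : ℝ}
    (hc : 0 ≤ c) (hg : LowerSemicontinuous g) (x : ι → ℝ) :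
    lmarginal (fun _ => volume) S g x + ENNReal.ofReal (2 * c) *
        lmarginal (fun _ => volume) (S.erase i) (coordProj {i}ᶜ g) x ≤
      lmarginal (fun _ => volume) S
        (translateSup (Set.Icc (-Pi.single i c) (Pi.single i c)) g) x := by
  rw [lmarginal_erase' _ hg.measurable hi,
    lmarginal_erase' _ (lowerSemicontinuous_translateSup hg).measurable hi]
  unfold lmarginal
  rw [← lintegral_const_mul' _ _ ENNReal.ofReal_ne_top]
  refine (le_lintegral_add _ _).trans (lintegral_mono fun y => ?_)
  simp only [coordProj_compl_singleton]
  exact (lintegral_add_mul_iSup_le_lintegral_translateSup _ hc).trans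
    (lintegral_mono fun t => translateSup_update_le i c t g _)

lemma lmarginal_add_sum_le_lmarginal_translateSup_sum {S T : Finset ι} (hTS : T ⊆ S)
    {c : ι → ℝ} (hc : 0 ≤ c) (hg : LowerSemicontinuous g) (x : ι → ℝ) :
    lmarginal (fun _ => volume) S g x + ∑ i ∈ T, ENNReal.ofReal (2 * c i) *
        lmarginal (fun _ => volume) (S.erase i) (coordProj {i}ᶜ g) x ≤
      lmarginal (fun _ => volume) S (translateSup
        (Set.Icc (-∑ i ∈ T, Pi.single i (c i)) (∑ i ∈ T, Pi.single i (c i))) g) x := by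
  have hsingle (i : ι) : (0 : ι → ℝ) ≤ Pi.single i (c i) := Pi.single_nonneg.2 (hc i)
  induction T using Finset.induction_on with
  | empty =>
    simpa using lmarginal_mono (fun y => self_le_translateSup (by simp) y) x
  | insert i T hi ih =>
    set q : ι → ℝ := ∑ j ∈ T, Pi.single j (c j) with hq
    have hq0 : 0 ≤ q := Finset.sum_nonneg fun j _ => hsingle j
    have hmem : (0 : ι → ℝ) ∈ Set.Icc (-q) q := ⟨neg_nonpos.2 hq0, hq0⟩
    have hIcc : Set.Icc (-Pi.single i (c i)) (Pi.single i (c i)) + Set.Icc (-q) q ⊆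
        Set.Icc (-(Pi.single i (c i) + q)) (Pi.single i (c i) + q) := by
      rw [neg_add]
      exact Set.Icc_add_Icc_subset _ _ _ _
    rw [Finset.sum_insert hi, Finset.sum_insert hi, ← hq, add_left_comm, add_comm]
    calc _ ≤ lmarginal (fun _ => volume) S (translateSup (Set.Icc (-q) q) g) x +
          ENNReal.ofReal (2 * c i) * lmarginal (fun _ => volume) (S.erase i)
            (coordProj {i}ᶜ (translateSup (Set.Icc (-q) q) g)) x :=
          add_le_add (ih ((Finset.subset_insert _ _).trans hTS)) <| mul_le_mul_right
            (lmarginal_mono (coordProj_mono _ (self_le_translateSup hmem)) x) _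
      _ ≤ _ := lmarginal_add_mul_lmarginal_erase_le (hTS (Finset.mem_insert_self _ _)) (hc i)
            (lowerSemicontinuous_translateSup hg) x
      _ ≤ _ := lmarginal_mono (translateSup_translateSup_le hIcc) x

omit [Fintype ι] in
lemma projIntegral_add_sum_le_lmarginal_translateSup [Finite ι] (S : Finset ι) {c : ι → ℝ}
    (hc : 0 ≤ c) (hg : LowerSemicontinuous g) (x : ι → ℝ) :
    projIntegral S g + ∑ i ∈ S, ENNReal.ofReal (2 * c i) * projIntegral (S.erase i) g ≤
      lmarginal (fun _ => volume) S (translateSup (Set.Icc (-c) c) (coordProj S g)) x := by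
  cases nonempty_fintype ι
  have hle : ∑ i ∈ S, Pi.single i (c i) ≤ c := by
    calc ∑ i ∈ S, Pi.single i (c i) ≤ ∑ i, Pi.single i (c i) :=
          Finset.sum_le_univ_sum_of_nonneg fun i => Pi.single_nonneg.2 (hc i)
      _ = c := Finset.univ_sum_single c
  have herase (i : ι) : coordProj {i}ᶜ (coordProj S g) = coordProj (S.erase i) g := by
    rw [coordProj_coordProj, Finset.inter_comm, ← Finset.sdiff_eq_inter_compl,
      Finset.sdiff_singleton_eq_erase]
  have h := lmarginal_add_sum_le_lmarginal_translateSup_sum (Finset.Subset.refl S) hc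
    (lowerSemicontinuous_coordProj S hg) x
  simp only [herase, lmarginal_coordProj] at h
  exact h.trans (lmarginal_mono
    (translateSup_mono_set (Set.Icc_subset_Icc (neg_le_neg hle) hle)) x)

end BoxTranslates

/-! ### Functions that grow slowly under dilations -/

section DilationBound

/-- Moving by `t • b` with `b ∈ B` increases `g` at most by the factor `exp (lam * t)`, once the
argument is contracted towards `c` by the factor `1 + t`. For the indicator of a convex set
`K ∋ c` and `B = c - K` this holds with `lam = 0`; a log-concave function satisfies it when `B` is
contained in a translated superlevel set. -/
def DilationBound {E : Type*} [AddCommGroup E] [Module ℝ E] (B : Set E) (c : E) (lam : ℝ)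
    (g : E → ℝ≥0∞) : Prop :=
  ∀ t : ℝ, 0 < t → ∀ b ∈ B, ∀ x,
    g (x + t • b) ≤ ENNReal.ofReal (Real.exp (lam * t)) * g ((1 + t)⁻¹ • (x + t • c))

variable {E : Type*}

lemma DilationBound.mono [AddCommGroup E] [Module ℝ E] {B B' : Set E} {c : E} {lam : ℝ}
    {g : E → ℝ≥0∞} (h : DilationBound B c lam g) (hB : B' ⊆ B) : DilationBound B' c lam g :=
  fun t ht b hb => h t ht b (hB hb)

lemma DilationBound.translateSup_smul_le [AddCommGroup E] [Module ℝ E] {B : Set E} {c : E}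
    {lam : ℝ} {g : E → ℝ≥0∞} (h : DilationBound B c lam g) {t : ℝ} (ht : 0 < t) (x : E) :
    translateSup (t • B) g x ≤
      ENNReal.ofReal (Real.exp (lam * t)) * g ((1 + t)⁻¹ • (x + t • c)) := by
  refine iSup₂_le fun q hq => ?_
  obtain ⟨b, hb, rfl⟩ := hq
  exact h t ht b hb x

lemma DilationBound.translateSup_of_starConvex [AddCommGroup E] [Module ℝ E] {B C : Set E} {c : E}
    {lam : ℝ} {g : E → ℝ≥0∞} (h : DilationBound B c lam g) (hC : StarConvex ℝ 0 C) :
    DilationBound B c lam (translateSup C g) := by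
  intro t ht b hb x
  refine iSup₂_le fun q hq => ?_
  have hmem : (1 + t)⁻¹ • q ∈ C := by
    refine hC.smul_mem hq (by positivity) ?_
    exact inv_le_one_of_one_le₀ (by linarith)
  calc g (x + t • b + q) = g (x + q + t • b) := by rw [add_right_comm]
    _ ≤ ENNReal.ofReal (Real.exp (lam * t)) * g ((1 + t)⁻¹ • (x + q + t • c)) := h t ht b hb _
    _ = ENNReal.ofReal (Real.exp (lam * t)) *
          g ((1 + t)⁻¹ • (x + t • c) + (1 + t)⁻¹ • q) := by
        rw [add_right_comm, smul_add _ _ q]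
    _ ≤ _ := by gcongr; exact le_translateSup hmem _

variable [NormedAddCommGroup E] [NormedSpace ℝ E] [FiniteDimensional ℝ E] [MeasurableSpace E]
  [BorelSpace E] (μ : Measure E) [μ.IsAddHaarMeasure]

lemma lintegral_comp_inv_smul (g : E → ℝ≥0∞) {r : ℝ} (hr : 0 < r) :
    ∫⁻ x, g (r⁻¹ • x) ∂μ = ENNReal.ofReal (r ^ Module.finrank ℝ E) * ∫⁻ x, g x ∂μ := by
  have hemb : MeasurableEmbedding (fun x : E => r⁻¹ • x) :=
    (Homeomorph.smulOfNeZero r⁻¹ (by positivity)).measurableEmbedding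
  rw [← hemb.lintegral_map, Measure.map_addHaar_smul μ (by positivity : r⁻¹ ≠ 0),
    lintegral_smul_measure, smul_eq_mul, inv_pow, inv_inv, abs_of_pos (by positivity)]

lemma lintegral_comp_dilation (g : E → ℝ≥0∞) (c : E) {t : ℝ} (ht : 0 < t) :
    ∫⁻ x, g ((1 + t)⁻¹ • (x + t • c)) ∂μ =
      ENNReal.ofReal ((1 + t) ^ Module.finrank ℝ E) * ∫⁻ x, g x ∂μ := by
  rw [lintegral_add_right_eq_self (fun x => g ((1 + t)⁻¹ • x)),
    lintegral_comp_inv_smul μ g (by positivity)]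

lemma DilationBound.lintegral_translateSup_smul_le {B : Set E} {c : E} {lam : ℝ} {g : E → ℝ≥0∞}
    (h : DilationBound B c lam g) {t : ℝ} (ht : 0 < t) :
    ∫⁻ x, translateSup (t • B) g x ∂μ ≤
      ENNReal.ofReal (Real.exp (lam * t) * (1 + t) ^ Module.finrank ℝ E) * ∫⁻ x, g x ∂μ := by
  calc ∫⁻ x, translateSup (t • B) g x ∂μ
      ≤ ∫⁻ x, ENNReal.ofReal (Real.exp (lam * t)) * g ((1 + t)⁻¹ • (x + t • c)) ∂μ :=
        lintegral_mono (h.translateSup_smul_le ht)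
    _ = _ := by
        rw [lintegral_const_mul' _ _ ENNReal.ofReal_ne_top, lintegral_comp_dilation μ g c ht,
          ← mul_assoc, ← ENNReal.ofReal_mul (by positivity)]

end DilationBound

section BoxDilation

lemma Icc_neg_smul_eq {ι : Type*} {t : ℝ} (ht : 0 < t) (a : ι → ℝ) :
    Set.Icc (-(t • a)) (t • a) = t • Set.Icc (-a) a := by
  rw [← smul_neg]
  exact ((OrderIso.smulRight ht).image_Icc _ _).symm

lemma le_mul_of_forall_add_mul_le {X Y lam : ℝ} (d : ℕ)
    (h : ∀ t : ℝ, 0 < t → Y + t * X ≤ Real.exp (lam * t) * (1 + t) ^ d * Y) :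
    X ≤ (d + lam) * Y := by
  have hexp : HasDerivAt (fun t : ℝ => Real.exp (lam * t)) lam 0 := by
    simpa using ((hasDerivAt_id (0 : ℝ)).const_mul lam).exp
  have hpow : HasDerivAt (fun t : ℝ => (1 + t) ^ d) (d : ℝ) 0 := by
    simpa using ((hasDerivAt_id (0 : ℝ)).const_add 1).fun_pow d
  have hderiv : HasDerivAt (fun t : ℝ => Real.exp (lam * t) * (1 + t) ^ d * Y)
      ((d + lam) * Y) 0 :=
    ((hexp.mul hpow).mul_const Y).congr_deriv (by norm_num [add_comm])
  refine ge_of_tendsto hderiv.tendsto_slope_zero_right ?_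
  filter_upwards [self_mem_nhdsWithin] with t (ht : 0 < t)
  simp only [zero_add, smul_eq_mul, mul_zero, Real.exp_zero, add_zero, one_pow, one_mul]
  rw [le_inv_mul_iff₀ ht]
  linarith [h t ht]

variable {ι : Type*} [DecidableEq ι] {a c : ι → ℝ} {lam : ℝ} {g : (ι → ℝ) → ℝ≥0∞}

lemma DilationBound.coordProj (ha : 0 ≤ a) (h : DilationBound (Set.Icc (-a) a) c lam g)
    (S : Finset ι) : DilationBound (Set.Icc (-a) a) c lam (coordProj S g) := by
  intro t ht b hb x
  refine iSup_le fun z => ?_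
  have hmem : S.piecewise b 0 ∈ Set.Icc (-a) a :=
    ⟨S.le_piecewise_of_le_of_le hb.1 (neg_nonpos.2 ha), S.piecewise_le_of_le_of_le hb.2 ha⟩
  have hadd : S.piecewise (x + t • b) z = S.piecewise x z + t • S.piecewise b 0 := by
    ext i
    by_cases hi : i ∈ S <;> simp [hi]
  have hsmul : (1 + t)⁻¹ • (S.piecewise x z + t • c) =
      S.piecewise ((1 + t)⁻¹ • (x + t • c)) ((1 + t)⁻¹ • (z + t • c)) := by
    ext i
    by_cases hi : i ∈ S <;> simp [hi, mul_add]
  rw [hadd]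
  refine (h t ht _ hmem _).trans ?_
  rw [hsmul]
  gcongr
  exact le_coordProj S g _ _

lemma lmarginal_comp_dilation (S : Finset ι) (g : (ι → ℝ) → ℝ≥0∞) (c : ι → ℝ) {t : ℝ}
    (ht : 0 < t) :
    lmarginal (fun _ => volume) S (fun x => g ((1 + t)⁻¹ • (x + t • c))) c =
      ENNReal.ofReal ((1 + t) ^ S.card) * lmarginal (fun _ => volume) S g c := by
  have hcomp (y : S → ℝ) : (1 + t)⁻¹ • (Function.updateFinset c S y + t • c) =
      Function.updateFinset c S ((1 + t)⁻¹ • (y + t • S.restrict c)) := by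
    ext i
    by_cases hi : i ∈ S
    · simp [Function.updateFinset, hi]
    · simp [Function.updateFinset, hi]
      field_simp
  have h := lintegral_comp_dilation volume (fun y : S → ℝ => g (Function.updateFinset c S y))
    (S.restrict c) ht
  rw [Module.finrank_fintype_fun_eq_card, Fintype.card_coe] at h
  simp only [lmarginal, hcomp]
  exact h

lemma DilationBound.lmarginal_translateSup_smul_le {S : Finset ι} {B : Set (ι → ℝ)}
    (h : DilationBound B c lam g) {t : ℝ} (ht : 0 < t) :
    lmarginal (fun _ => volume) S (translateSup (t • B) g) c ≤
      ENNReal.ofReal (Real.exp (lam * t) * (1 + t) ^ S.card) *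
        lmarginal (fun _ => volume) S g c := by
  calc lmarginal (fun _ => volume) S (translateSup (t • B) g) c
      ≤ lmarginal (fun _ => volume) S
          (fun x => ENNReal.ofReal (Real.exp (lam * t)) * g ((1 + t)⁻¹ • (x + t • c))) c :=
        lmarginal_mono (h.translateSup_smul_le ht) c
    _ = ENNReal.ofReal (Real.exp (lam * t)) *
          lmarginal (fun _ => volume) S (fun x => g ((1 + t)⁻¹ • (x + t • c))) c :=
        lintegral_const_mul' _ _ ENNReal.ofReal_ne_top
    _ = _ := by
        rw [lmarginal_comp_dilation S g c ht, ← mul_assoc, ← ENNReal.ofReal_mul (by positivity)]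

variable [Finite ι]

lemma DilationBound.projIntegral_add_sum_le (ha : 0 ≤ a) (hg : LowerSemicontinuous g)
    (h : DilationBound (Set.Icc (-a) a) c lam g) (S : Finset ι) {t : ℝ} (ht : 0 < t) :
    projIntegral S g +
        ENNReal.ofReal t * ∑ i ∈ S, ENNReal.ofReal (2 * a i) * projIntegral (S.erase i) g ≤
      ENNReal.ofReal (Real.exp (lam * t) * (1 + t) ^ S.card) * projIntegral S g := by
  have hsum : ENNReal.ofReal t * ∑ i ∈ S, ENNReal.ofReal (2 * a i) * projIntegral (S.erase i) g =
      ∑ i ∈ S, ENNReal.ofReal (2 * (t • a) i) * projIntegral (S.erase i) g := by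
    rw [Finset.mul_sum]
    refine Finset.sum_congr rfl fun i _ => ?_
    rw [← mul_assoc, ← ENNReal.ofReal_mul ht.le, Pi.smul_apply, smul_eq_mul, mul_left_comm]
  rw [hsum]
  refine (projIntegral_add_sum_le_lmarginal_translateSup S (smul_nonneg ht.le ha) hg c).trans ?_
  rw [Icc_neg_smul_eq ht, ← lmarginal_coordProj S g c]
  exact (h.coordProj ha S).lmarginal_translateSup_smul_le ht

lemma DilationBound.sum_mul_projIntegral_erase_le (ha : 0 ≤ a) (hlam : 0 ≤ lam)
    (hg : LowerSemicontinuous g) (h : DilationBound (Set.Icc (-a) a) c lam g) {S : Finset ι}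
    (hS : S.Nonempty) :
    ∑ i ∈ S, ENNReal.ofReal (2 * a i) * projIntegral (S.erase i) g ≤
      ENNReal.ofReal (S.card + lam) * projIntegral S g := by
  have hpos : (0 : ℝ) < S.card + lam := add_pos_of_pos_of_nonneg (mod_cast hS.card_pos) hlam
  set Y := projIntegral S g
  set X := ∑ i ∈ S, ENNReal.ofReal (2 * a i) * projIntegral (S.erase i) g
  by_cases hY : Y = ⊤
  · simp [hY, ENNReal.mul_top, hpos]
  have hstep (t : ℝ) (ht : 0 < t) :
      Y + ENNReal.ofReal t * X ≤ ENNReal.ofReal (Real.exp (lam * t) * (1 + t) ^ S.card) * Y :=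
    h.projIntegral_add_sum_le ha hg S ht
  have hX : X ≠ ⊤ := by
    have h1 : X ≤ ENNReal.ofReal (Real.exp (lam * 1) * (1 + 1) ^ S.card) * Y := by
      simpa using le_add_self.trans (hstep 1 one_pos)
    exact ne_top_of_le_ne_top (by finiteness) h1
  have hreal : X.toReal ≤ (S.card + lam) * Y.toReal := by
    refine le_mul_of_forall_add_mul_le _ fun t ht => ?_
    have := ENNReal.toReal_mono (by finiteness) (hstep t ht)
    rwa [ENNReal.toReal_add hY (by finiteness), ENNReal.toReal_mul, ENNReal.toReal_mul,
      ENNReal.toReal_ofReal ht.le, ENNReal.toReal_ofReal (by positivity)] at this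
  rw [← ENNReal.ofReal_toReal hX, ← ENNReal.ofReal_toReal hY, ← ENNReal.ofReal_mul hpos.le]
  exact ENNReal.ofReal_le_ofReal hreal

end BoxDilation

/-! ### Weighted sums of projection integrals -/

section WeightedProjSum

variable {ι : Type*} [Fintype ι] [DecidableEq ι]

/-- The sum of the integrals of all `d`-dimensional coordinate projections of `g`, each weighted
by the volume of the orthogonal face of the box `∏ i, [-a i, a i]`. For the indicator of a convex
body this is a binomial multiple of a mixed volume of the body with the box. -/
def weightedProjSum (d : ℕ) (a : ι → ℝ) (g : (ι → ℝ) → ℝ≥0∞) : ℝ≥0∞ :=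
  ∑ S ∈ Finset.powersetCard d Finset.univ,
    (∏ i ∈ Sᶜ, ENNReal.ofReal (2 * a i)) * projIntegral S g

lemma weightedProjSum_mono (d : ℕ) (a : ι → ℝ) {g h : (ι → ℝ) → ℝ≥0∞} (hgh : g ≤ h) :
    weightedProjSum d a g ≤ weightedProjSum d a h := by
  unfold weightedProjSum
  gcongr with S
  exact projIntegral_mono S hgh

lemma weightedProjSum_card (a : ι → ℝ) (g : (ι → ℝ) → ℝ≥0∞) :
    weightedProjSum (Fintype.card ι) a g = ∫⁻ x, g x := by
  simp [weightedProjSum, ← Finset.card_univ, Finset.powersetCard_self, projIntegral_univ]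

/- Both sides sum over the pairs `S ⊂ insert i S`. -/
lemma mul_sum_powersetCard_prod_compl {R : Type*} [CommSemiring R] {d m : ℕ}
    (hdm : d + m + 1 = Fintype.card ι) (w : ι → R) (J : Finset ι → R) :
    ((m + 1 : ℕ) : R) * ∑ S ∈ Finset.powersetCard d Finset.univ, (∏ i ∈ Sᶜ, w i) * J S =
      ∑ S ∈ Finset.powersetCard (d + 1) Finset.univ,
        (∏ i ∈ Sᶜ, w i) * ∑ i ∈ S, w i * J (S.erase i) := by
  have hcount : ((m + 1 : ℕ) : R) * ∑ S ∈ Finset.powersetCard d Finset.univ,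
      (∏ i ∈ Sᶜ, w i) * J S =
      ∑ S ∈ Finset.powersetCard d Finset.univ, ∑ _i ∈ Sᶜ, (∏ i ∈ Sᶜ, w i) * J S := by
    rw [Finset.mul_sum]
    refine Finset.sum_congr rfl fun S hS => ?_
    have hcard : Sᶜ.card = m + 1 := by
      rw [Finset.card_compl, (Finset.mem_powersetCard.1 hS).2]
      omega
    rw [Finset.sum_const, nsmul_eq_mul, hcard]
  rw [hcount]
  simp_rw [Finset.mul_sum]
  rw [Finset.sum_sigma', Finset.sum_sigma']
  refine Finset.sum_bij' (fun p _ => ⟨insert p.2 p.1, p.2⟩) (fun p _ => ⟨p.1.erase p.2, p.2⟩)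
    ?_ ?_ ?_ ?_ ?_ <;> rintro ⟨S, i⟩ h <;>
    simp only [Finset.mem_sigma, Finset.mem_powersetCard_univ, Finset.mem_compl] at h ⊢
  · exact ⟨by rw [Finset.card_insert_of_notMem h.2, h.1], Finset.mem_insert_self _ _⟩
  · exact ⟨by rw [Finset.card_erase_of_mem h.2, h.1, Nat.add_sub_cancel], Finset.notMem_erase _ _⟩
  · rw [Finset.erase_insert h.2]
  · rw [Finset.insert_erase h.2]
  · rw [Finset.erase_insert h.2, Finset.compl_insert, ← mul_assoc,
      Finset.prod_erase_mul _ _ (Finset.mem_compl.2 h.2)]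

variable {a c : ι → ℝ} {lam : ℝ} {g : (ι → ℝ) → ℝ≥0∞}

lemma DilationBound.weightedProjSum_succ_le {d m : ℕ} (hdm : d + m + 1 = Fintype.card ι)
    (ha : 0 ≤ a) (hlam : 0 ≤ lam) (hg : LowerSemicontinuous g)
    (h : DilationBound (Set.Icc (-a) a) c lam g) :
    ((m + 1 : ℕ) : ℝ≥0∞) * weightedProjSum d a g ≤
      ENNReal.ofReal (Fintype.card ι + lam) * weightedProjSum (d + 1) a g := by
  unfold weightedProjSum
  rw [mul_sum_powersetCard_prod_compl hdm, Finset.mul_sum]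
  refine Finset.sum_le_sum fun S hS => ?_
  have hcard : S.card = d + 1 := (Finset.mem_powersetCard.1 hS).2
  rw [mul_left_comm]
  gcongr
  refine (h.sum_mul_projIntegral_erase_le ha hlam hg (Finset.card_pos.1 (by omega))).trans ?_
  gcongr
  exact Finset.card_le_univ S

lemma DilationBound.factorial_mul_weightedProjSum_le_of_lowerSemicontinuous {d m : ℕ}
    (hdm : d + m = Fintype.card ι) (ha : 0 ≤ a) (hlam : 0 ≤ lam) (hg : LowerSemicontinuous g)
    (h : DilationBound (Set.Icc (-a) a) c lam g) :
    (m.factorial : ℝ≥0∞) * weightedProjSum d a g ≤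
      ENNReal.ofReal (Fintype.card ι + lam) ^ m * ∫⁻ x, g x := by
  induction m generalizing d with
  | zero =>
    obtain rfl : d = Fintype.card ι := hdm
    simp [weightedProjSum_card]
  | succ m ih =>
    set L := ENNReal.ofReal (Fintype.card ι + lam)
    calc ((m + 1).factorial : ℝ≥0∞) * weightedProjSum d a g
        = m.factorial * (((m + 1 : ℕ) : ℝ≥0∞) * weightedProjSum d a g) := by
          rw [Nat.factorial_succ, Nat.cast_mul]
          ring
      _ ≤ m.factorial * (L * weightedProjSum (d + 1) a g) :=
          mul_le_mul_right (h.weightedProjSum_succ_le (by omega) ha hlam hg) _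
      _ = L * (m.factorial * weightedProjSum (d + 1) a g) := by ring
      _ ≤ L * (L ^ m * ∫⁻ x, g x) := mul_le_mul_right (ih (d := d + 1) (by omega)) _
      _ = L ^ (m + 1) * ∫⁻ x, g x := by ring

/- Taking suprema over a small open box makes `g` lower semicontinuous, keeps the dilation bound,
and by that bound costs a factor which tends to `1` as the box shrinks. -/
lemma DilationBound.factorial_mul_weightedProjSum_le {d m : ℕ} (hdm : d + m = Fintype.card ι)
    (ha : ∀ i, 0 < a i) (hlam : 0 ≤ lam) (h : DilationBound (Set.Icc (-a) a) c lam g) :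
    (m.factorial : ℝ≥0∞) * weightedProjSum d a g ≤
      ENNReal.ofReal (Fintype.card ι + lam) ^ m * ∫⁻ x, g x := by
  set R := ENNReal.ofReal (Fintype.card ι + lam) ^ m * ∫⁻ x, g x
  set B : Set (ι → ℝ) := Set.univ.pi fun i => Set.Ioo (-a i) (a i)
  have hB_open : IsOpen B := isOpen_set_pi Set.finite_univ fun _ _ => isOpen_Ioo
  have hB_conv : Convex ℝ B := convex_pi fun _ _ => convex_Ioo _ _
  have hB_zero : (0 : ι → ℝ) ∈ B := fun i _ => ⟨neg_lt_zero.2 (ha i), ha i⟩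
  have hB_sub : B ⊆ Set.Icc (-a) a := fun x hx =>
    ⟨fun i => (hx i trivial).1.le, fun i => (hx i trivial).2.le⟩
  have h0 (σ : ℝ) : (0 : ι → ℝ) ∈ σ • B := ⟨0, hB_zero, smul_zero σ⟩
  have hdil (σ : ℝ) : DilationBound (Set.Icc (-a) a) c lam (translateSup (σ • B) g) :=
    h.translateSup_of_starConvex ((hB_conv.smul σ).starConvex (h0 σ))
  have hbound (σ : ℝ) (hσ : 0 < σ) : m.factorial * weightedProjSum d a g ≤
      ENNReal.ofReal (Real.exp (lam * σ) * (1 + σ) ^ Fintype.card ι) * R := by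
    calc m.factorial * weightedProjSum d a g
        ≤ m.factorial * weightedProjSum d a (translateSup (σ • B) g) := by
          gcongr
          exact weightedProjSum_mono d a (self_le_translateSup (h0 σ))
      _ ≤ ENNReal.ofReal (Fintype.card ι + lam) ^ m * ∫⁻ x, translateSup (σ • B) g x :=
          (hdil σ).factorial_mul_weightedProjSum_le_of_lowerSemicontinuous hdm
            (fun i => (ha i).le) hlam
            (lowerSemicontinuous_translateSup_of_isOpen (hB_open.smul₀ hσ.ne'))
      _ ≤ ENNReal.ofReal (Fintype.card ι + lam) ^ m *
            (ENNReal.ofReal (Real.exp (lam * σ) * (1 + σ) ^ Fintype.card ι) * ∫⁻ x, g x) := by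
          gcongr
          simpa using (h.mono hB_sub).lintegral_translateSup_smul_le volume hσ
      _ = _ := mul_left_comm _ _ _
  by_cases hR : R = ⊤
  · exact hR ▸ le_top
  have hcont : Continuous fun σ : ℝ =>
      ENNReal.ofReal (Real.exp (lam * σ) * (1 + σ) ^ Fintype.card ι) * R :=
    ENNReal.continuous_mul_const hR |>.comp (ENNReal.continuous_ofReal.comp (by fun_prop))
  have hlim := hcont.continuousWithinAt (s := Set.Ioi 0) (x := 0)
  refine ge_of_tendsto (by simpa using hlim.tendsto) ?_
  filter_upwards [self_mem_nhdsWithin] with σ hσ using hbound σ hσ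

end WeightedProjSum

/-! ### The inequalities of Finner and of Loomis and Whitney -/

section Finner

variable {ι : Type*} [DecidableEq ι]

lemma lmarginal_update_of_forall_eq {X : ι → Type*} [∀ i, MeasurableSpace (X i)]
    {μ : ∀ i, Measure (X i)} {S : Finset ι} {g : (∀ i, X i) → ℝ≥0∞}
    (hg : ∀ x y, (∀ i ∈ S, x i = y i) → g x = g y) (T : Finset ι) {i : ι} (hi : i ∉ S)
    (x : ∀ i, X i) (t : X i) : lmarginal μ T g (Function.update x i t) = lmarginal μ T g x := by
  refine lintegral_congr fun y => hg _ _ fun j hj => ?_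
  have hji : j ≠ i := fun h => hi (h ▸ hj)
  simp [Function.updateFinset, hji]

/- Induction on `T`: integrating out one more coordinate is one application of Hölder's inequality
to the factors that depend on it. -/
lemma lmarginal_prod_rpow_le_prod_lmarginal_rpow {X : ι → Type*} [∀ i, MeasurableSpace (X i)]
    {μ : ∀ i, Measure (X i)} [∀ i, SigmaFinite (μ i)] (F : Finset (Finset ι))
    {p : Finset ι → ℝ} (hp : ∀ S ∈ F, 0 ≤ p S) (hcover : ∀ i, ∑ S ∈ F with i ∈ S, p S = 1)
    {g : Finset ι → (∀ i, X i) → ℝ≥0∞} (hg : ∀ S, Measurable (g S))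
    (hdep : ∀ S x y, (∀ i ∈ S, x i = y i) → g S x = g S y) (T : Finset ι) (x : ∀ i, X i) :
    lmarginal μ T (fun x => ∏ S ∈ F, g S x ^ p S) x ≤
      ∏ S ∈ F, (lmarginal μ (T ∩ S) (g S) x) ^ p S := by
  induction T using Finset.induction_on generalizing x with
  | empty => simp
  | insert i T hi ih =>
    set G : Finset ι → X i → ℝ≥0∞ :=
      fun S t => lmarginal μ (T ∩ S) (g S) (Function.update x i t) with hG_def
    have hG (S : Finset ι) : Measurable (G S) :=
      ((hg S).lmarginal _).comp (measurable_update x)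
    set A : ℝ≥0∞ := ∏ S ∈ F with i ∉ S, (lmarginal μ (T ∩ S) (g S) x) ^ p S
    have hsplit (t : X i) : ∏ S ∈ F, G S t ^ p S = (∏ S ∈ F with i ∈ S, G S t ^ p S) * A := by
      rw [← Finset.prod_filter_mul_prod_filter_not F (fun S => i ∈ S)]
      congr 1
      refine Finset.prod_congr rfl fun S hS => ?_
      rw [hG_def, ← lmarginal_update_of_forall_eq (hdep S) _ (Finset.mem_filter.1 hS).2]
    calc lmarginal μ (insert i T) (fun x => ∏ S ∈ F, g S x ^ p S) x
        = ∫⁻ t, lmarginal μ T (fun x => ∏ S ∈ F, g S x ^ p S) (Function.update x i t) ∂μ i :=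
          lmarginal_insert _ (Finset.measurable_fun_prod _ fun S _ => (hg S).pow_const _) hi x
      _ ≤ ∫⁻ t, (∏ S ∈ F with i ∈ S, G S t ^ p S) * A ∂μ i :=
          lintegral_mono fun t => (ih _).trans_eq (hsplit t)
      _ = (∫⁻ t, ∏ S ∈ F with i ∈ S, G S t ^ p S ∂μ i) * A :=
          lintegral_mul_const _ (Finset.measurable_fun_prod _ fun S _ => (hG S).pow_const _)
      _ ≤ (∏ S ∈ F with i ∈ S, (∫⁻ t, G S t ∂μ i) ^ p S) * A := by
          gcongr
          exact ENNReal.lintegral_prod_norm_pow_le _ (fun S _ => (hG S).aemeasurable) (hcover i)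
            fun S hS => hp S (Finset.mem_filter.1 hS).1
      _ = ∏ S ∈ F, (lmarginal μ (insert i T ∩ S) (g S) x) ^ p S := by
          rw [← Finset.prod_filter_mul_prod_filter_not F (fun S => i ∈ S)]
          congr 1 <;> refine Finset.prod_congr rfl fun S hS => ?_
          · rw [Finset.insert_inter_of_mem (Finset.mem_filter.1 hS).2,
              lmarginal_insert _ (hg S) (by simp [hi])]
          · rw [Finset.insert_inter_of_notMem (Finset.mem_filter.1 hS).2]

variable [Fintype ι]

omit [DecidableEq ι] in
lemma quasiMeasurePreserving_finset_restrict {X : ι → Type*} [∀ i, MeasurableSpace (X i)]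
    (μ : ∀ i, Measure (X i)) [∀ i, SigmaFinite (μ i)] (S : Finset ι) :
    Measure.QuasiMeasurePreserving S.restrict (Measure.pi μ) (Measure.pi fun i : S => μ i) := by
  classical
  convert Measure.quasiMeasurePreserving_fst.comp
    (measurePreserving_piEquivPiSubtypeProd μ fun i => i ∈ S).quasiMeasurePreserving using 1
  · rfl
  · congr!

/-- **Finner's inequality.** -/
lemma lintegral_prod_rpow_le_prod_lintegral_rpow {X : ι → Type*} [∀ i, MeasurableSpace (X i)]
    {μ : ∀ i, Measure (X i)} [∀ i, SigmaFinite (μ i)] (F : Finset (Finset ι))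
    {p : Finset ι → ℝ} (hp : ∀ S ∈ F, 0 ≤ p S) (hcover : ∀ i, ∑ S ∈ F with i ∈ S, p S = 1)
    {g : ∀ S : Finset ι, (∀ i : S, X i) → ℝ≥0∞}
    (hg : ∀ S, AEMeasurable (g S) (Measure.pi fun i : S => μ i)) :
    ∫⁻ x, ∏ S ∈ F, g S (S.restrict x) ^ p S ∂Measure.pi μ ≤
      ∏ S ∈ F, (∫⁻ y, g S y ∂Measure.pi fun i : S => μ i) ^ p S := by
  rcases isEmpty_or_nonempty (∀ i, X i) with hX | ⟨⟨x₀⟩⟩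
  · simp
  set G : Finset ι → (∀ i, X i) → ℝ≥0∞ := fun S x => (hg S).mk (g S) (S.restrict x)
  have hG (S : Finset ι) : Measurable (G S) :=
    (hg S).measurable_mk.comp (Finset.measurable_restrict S)
  have hdep (S : Finset ι) (x y : ∀ i, X i) (hxy : ∀ i ∈ S, x i = y i) : G S x = G S y := by
    have hrestrict : S.restrict x = S.restrict y := funext fun i => hxy i i.2
    simp only [G, hrestrict]
  have hae : ∀ᵐ x ∂Measure.pi μ, ∀ S, g S (S.restrict x) = G S x :=
    ae_all_iff.2 fun S => (quasiMeasurePreserving_finset_restrict μ S).ae (hg S).ae_eq_mk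
  have hlmarginal (S : Finset ι) :
      lmarginal μ S (G S) x₀ = ∫⁻ y, g S y ∂Measure.pi fun i : S => μ i := by
    refine lintegral_congr_ae ?_
    filter_upwards [(hg S).ae_eq_mk] with y hy
    have hrestrict : S.restrict (Function.updateFinset x₀ S y) = y :=
      funext fun i : S => by simp [Function.updateFinset]
    simp only [G, hrestrict, hy]
  have h := lmarginal_prod_rpow_le_prod_lmarginal_rpow (μ := μ) F hp hcover hG hdep Finset.univ x₀
  simp only [lmarginal_univ, Finset.univ_inter, hlmarginal] at h
  refine (lintegral_congr_ae ?_).trans_le h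
  filter_upwards [hae] with x hx
  simp only [hx]

lemma card_filter_mem_powersetCard (k : ℕ) (i : ι) :
    {S ∈ Finset.powersetCard (k + 1) (Finset.univ : Finset ι) | i ∈ S}.card =
      (Fintype.card ι - 1).choose k := by
  simpa using Finset.card_filter_powersetCard_subset {i} Finset.univ (k + 1)
    (Finset.subset_univ _) (by simp)

/-- The **Loomis–Whitney inequality** for functions. -/
lemma lintegral_rpow_le_prod_projIntegral_rpow {k : ℕ} (hk : k + 1 ≤ Fintype.card ι)
    {g : (ι → ℝ) → ℝ≥0∞} (hg : ∀ S : Finset ι,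
      AEMeasurable (fun y : S → ℝ => coordProj S g (Function.updateFinset 0 S y))) :
    ∫⁻ x, g x ^ ((Fintype.card ι : ℝ) / (k + 1 : ℕ)) ≤
      ∏ S ∈ Finset.powersetCard (k + 1) (Finset.univ : Finset ι),
        projIntegral S g ^ (((Fintype.card ι - 1).choose k : ℝ)⁻¹) := by
  set N := Fintype.card ι
  set p : ℝ := ((N - 1).choose k : ℝ)⁻¹ with hp_def
  have hchoose : ((N - 1).choose k : ℝ) ≠ 0 := mod_cast (Nat.choose_pos (by omega)).ne'
  have hp : 0 ≤ p := by positivity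
  have hexp : (N : ℝ) / (k + 1 : ℕ) = p * (N.choose (k + 1) : ℕ) := by
    have hmul := Nat.add_one_mul_choose_eq (N - 1) k
    rw [Nat.sub_add_cancel (by omega)] at hmul
    rw [div_eq_iff (by positivity), hp_def, mul_assoc, eq_inv_mul_iff_mul_eq₀ hchoose, mul_comm]
    exact_mod_cast hmul
  have hcover (i : ι) :
      ∑ S ∈ Finset.powersetCard (k + 1) (Finset.univ : Finset ι) with i ∈ S, p = 1 := by
    rw [Finset.sum_const, card_filter_mem_powersetCard, nsmul_eq_mul, mul_inv_cancel₀ hchoose]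
  calc ∫⁻ x, g x ^ ((N : ℝ) / (k + 1 : ℕ))
      = ∫⁻ x, ∏ _S ∈ Finset.powersetCard (k + 1) (Finset.univ : Finset ι), g x ^ p := by
        simp only [hexp, ENNReal.rpow_mul_natCast, Finset.prod_const, Finset.card_powersetCard,
          Finset.card_univ, N]
    _ ≤ ∫⁻ x, ∏ S ∈ Finset.powersetCard (k + 1) (Finset.univ : Finset ι),
          coordProj S g x ^ p :=
        lintegral_mono fun x => Finset.prod_le_prod' fun _ _ =>
          ENNReal.rpow_le_rpow (self_le_coordProj _ g x) hp
    _ ≤ _ := by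
        simpa only [coordProj_updateFinset_restrict, projIntegral_eq_lintegral, volume_pi] using
          lintegral_prod_rpow_le_prod_lintegral_rpow (X := fun _ => ℝ) (μ := fun _ => volume)
            _ (fun _ _ => hp) hcover hg

end Finner

/-! ### Convex bodies -/

section ConvexBody

/-- The largest subset `V` of `E` symmetric about `0` with `c + V ⊆ L`. -/
def symmetricPart {E : Type*} [AddCommGroup E] (L : Set E) (c : E) : Set E :=
  {v | c + v ∈ L ∧ c - v ∈ L}

lemma neg_mem_symmetricPart {E : Type*} [AddCommGroup E] {L : Set E} {c v : E}
    (hv : v ∈ symmetricPart L c) : -v ∈ symmetricPart L c := by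
  simpa [symmetricPart, sub_eq_add_neg] using hv.symm

lemma convex_symmetricPart {E : Type*} [AddCommGroup E] [Module ℝ E] {L : Set E}
    (hL : Convex ℝ L) (c : E) : Convex ℝ (symmetricPart L c) := by
  have hsub : Convex ℝ ((fun v => c - v) ⁻¹' L) :=
    hL.affine_preimage (AffineMap.const ℝ E c - AffineMap.id ℝ E)
  exact (hL.translate_preimage_right c).inter hsub

lemma isClosed_symmetricPart {E : Type*} [AddCommGroup E] [TopologicalSpace E]
    [IsTopologicalAddGroup E] {L : Set E} (hL : IsClosed L) (c : E) :
    IsClosed (symmetricPart L c) :=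
  (hL.preimage (continuous_const_add c)).inter (hL.preimage (continuous_const.sub continuous_id))

variable {E : Type*} [NormedAddCommGroup E] [NormedSpace ℝ E]

lemma ball_lineMap_subset_of_convex {A : Set E} (hA : Convex ℝ A) {x y : E} {r s : ℝ}
    (hball : Metric.ball x r ⊆ A) (hy : y ∈ A) (hs0 : 0 ≤ s) (hs1 : s < 1) :
    Metric.ball (AffineMap.lineMap x y s) ((1 - s) * r) ⊆ A := by
  intro z hz
  have hs : 0 < 1 - s := sub_pos.2 hs1
  have hw : AffineMap.lineMap x y s +
      (1 - s) • ((1 - s)⁻¹ • (z - AffineMap.lineMap x y s)) = z := by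
    rw [smul_inv_smul₀ hs.ne', add_sub_cancel]
  set w := (1 - s)⁻¹ • (z - AffineMap.lineMap x y s)
  have hwr : x + w ∈ Metric.ball x r := by
    rw [mem_ball_iff_norm, add_sub_cancel_left, norm_smul, norm_inv, Real.norm_of_nonneg hs.le,
      inv_mul_lt_iff₀ hs]
    exact mem_ball_iff_norm.1 hz
  have hmem := hA (hball hwr) hy hs.le hs0 (sub_add_cancel 1 s)
  rwa [smul_add, add_right_comm, ← AffineMap.lineMap_apply_module, hw] at hmem

variable [FiniteDimensional ℝ E] [MeasurableSpace E] [BorelSpace E] {μ : Measure E}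
  [μ.IsAddHaarMeasure]

lemma exists_ball_subset_of_convex {A : Set E} (hA : Convex ℝ A) (hpos : μ A ≠ 0) :
    ∃ x r, 0 < r ∧ Metric.ball x r ⊆ A := by
  have hne : (interior A).Nonempty := by
    rw [Set.nonempty_iff_ne_empty]
    intro hempty
    refine hpos (measure_mono_null ?_ (hA.addHaar_frontier μ))
    rw [frontier, hempty, Set.sdiff_empty]
    exact subset_closure
  obtain ⟨x, hx⟩ := hne
  obtain ⟨r, hr, hball⟩ := Metric.isOpen_iff.1 isOpen_interior x hx
  exact ⟨x, r, hr, hball.trans interior_subset⟩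

/- A far away point of `A` spans with the ball a cone that contains many disjoint balls of half the
radius, lined up along the segment joining the centre to the point. -/
lemma isBounded_of_convex {A : Set E} (hA : Convex ℝ A) (hpos : μ A ≠ 0) (hfin : μ A ≠ ∞) :
    Bornology.IsBounded A := by
  obtain ⟨x, r, hr, hball⟩ := exists_ball_subset_of_convex hA hpos
  have hsmall : μ (Metric.ball (0 : E) (r / 2)) ≠ 0 :=
    (Metric.measure_ball_pos μ _ (by positivity)).ne'
  obtain ⟨N, hN⟩ := ENNReal.exists_nat_mul_gt hsmall hfin
  have hN0 : N ≠ 0 := by rintro rfl; simp at hN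
  refine (Metric.isBounded_ball (x := x) (r := 2 * N * r)).subset fun y hy => ?_
  rw [Metric.mem_ball']
  by_contra! hfar
  set p : ℕ → E := fun j => AffineMap.lineMap x y ((j : ℝ) / (2 * N))
  have hsub : ⋃ j ∈ Finset.range N, Metric.ball (p j) (r / 2) ⊆ A := by
    refine Set.iUnion₂_subset fun j hj => ?_
    have hj2 : (j : ℝ) / (2 * N) ≤ 1 / 2 := by
      have hjN : (j : ℝ) ≤ N := mod_cast (Finset.mem_range.1 hj).le
      rw [div_le_div_iff₀ (by positivity) two_pos]
      linarith
    refine (Metric.ball_subset_ball ?_).trans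
      (ball_lineMap_subset_of_convex hA hball hy (by positivity) (by linarith))
    nlinarith
  have hdisj : (Finset.range N : Set ℕ).PairwiseDisjoint fun j => Metric.ball (p j) (r / 2) := by
    intro i _ j _ hij
    apply Metric.ball_disjoint_ball
    have hij1 : 1 ≤ |(i : ℝ) - j| := by
      exact_mod_cast Int.one_le_abs (sub_ne_zero.2 (Nat.cast_injective.ne hij))
    rw [dist_lineMap_lineMap, Real.dist_eq, ← sub_div, abs_div,
      abs_of_pos (by positivity : (0 : ℝ) < 2 * N), add_halves, div_mul_eq_mul_div,
      le_div_iff₀ (by positivity)]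
    calc r * (2 * N) = 1 * (2 * N * r) := by ring
      _ ≤ |(i : ℝ) - j| * dist x y := by gcongr
  have hle := measure_mono (μ := μ) hsub
  rw [measure_biUnion_finset hdisj fun _ _ => measurableSet_ball] at hle
  simp only [Measure.addHaar_ball_center, Finset.sum_const, Finset.card_range, nsmul_eq_mul] at hle
  exact hN.not_ge hle

lemma lintegral_measure_symmetricPart {L : Set E} (hL : MeasurableSet L) :
    2 ^ Module.finrank ℝ E * ∫⁻ c, μ (symmetricPart L c) ∂μ = μ L * μ L := by
  set T : Set (E × E) := {p | p.2 ∈ L ∧ (2 : ℝ) • p.1 - p.2 ∈ L}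
  have hT : MeasurableSet T :=
    (measurable_snd hL).inter (((measurable_fst.const_smul (2 : ℝ)).sub measurable_snd) hL)
  have hleft (c : E) : μ (symmetricPart L c) = μ (Prod.mk c ⁻¹' T) := by
    rw [← measure_preimage_add μ c (Prod.mk c ⁻¹' T)]
    congr 1 with v
    simp [T, symmetricPart, two_smul, add_sub_add_left_eq_sub]
  have hright (y : E) : 2 ^ Module.finrank ℝ E * μ ((fun c => (c, y)) ⁻¹' T) =
      L.indicator (fun _ => μ L) y := by
    by_cases hy : y ∈ L
    · have hslice : (fun c => (c, y)) ⁻¹' T = ((2 : ℝ) • ·) ⁻¹' ((· + -y) ⁻¹' L) := by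
        ext c; simp [T, hy, sub_eq_add_neg]
      rw [hslice, Measure.addHaar_preimage_smul μ two_ne_zero, measure_preimage_add_right,
        Set.indicator_of_mem hy, ← mul_assoc, abs_of_pos (by positivity),
        ENNReal.ofReal_inv_of_pos (by positivity), ENNReal.ofReal_pow zero_le_two,
        ENNReal.ofReal_ofNat, ENNReal.mul_inv_cancel (by simp) (by simp), one_mul]
    · have hslice : (fun c => (c, y)) ⁻¹' T = ∅ := by
        ext c; simp [T, hy]
      simp [hslice, hy]
  calc 2 ^ Module.finrank ℝ E * ∫⁻ c, μ (symmetricPart L c) ∂μ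
      = 2 ^ Module.finrank ℝ E * ∫⁻ y, μ ((fun c => (c, y)) ⁻¹' T) ∂μ := by
        simp only [hleft]
        rw [← Measure.prod_apply hT, ← Measure.prod_apply_symm hT]
    _ = ∫⁻ y, L.indicator (fun _ => μ L) y ∂μ := by
        rw [← lintegral_const_mul _ (measurable_measure_prodMk_right hT)]
        simp only [hright]
    _ = μ L * μ L := lintegral_indicator_const hL _

lemma exists_measure_le_mul_measure_symmetricPart {L : Set E} (hL : MeasurableSet L)
    (hconv : Convex ℝ L) (hpos : μ L ≠ 0) (hfin : μ L ≠ ∞) :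
    ∃ c, μ L ≤ 2 ^ Module.finrank ℝ E * μ (symmetricPart L c) := by
  have hsupp : Function.support (fun c => μ (symmetricPart L c)) ⊆ L := by
    intro c hc
    obtain ⟨v, hv⟩ := nonempty_of_measure_ne_zero hc
    have hmid := hconv hv.1 hv.2 one_half_pos.le one_half_pos.le (add_halves 1)
    convert hmid using 1
    module
  have hint := lintegral_measure_symmetricPart (μ := μ) hL
  rw [← setLIntegral_eq_of_support_subset hsupp] at hint
  have hfin_int : ∫⁻ c in L, μ (symmetricPart L c) ∂μ ≠ ∞ := fun h => by
    rw [h, ENNReal.mul_top (by simp)] at hint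
    exact ENNReal.mul_ne_top hfin hfin hint.symm
  obtain ⟨c, -, hc⟩ := exists_setLAverage_le hpos hL.nullMeasurableSet hfin_int
  refine ⟨c, ?_⟩
  rw [setLAverage_eq, ENNReal.div_le_iff hpos hfin] at hc
  rw [← ENNReal.mul_le_mul_iff_left hpos hfin, ← hint, mul_assoc]
  gcongr

lemma exists_ball_zero_subset_of_convex {A : Set E} (hA : Convex ℝ A) (hpos : μ A ≠ 0)
    (hsymm : ∀ v ∈ A, -v ∈ A) : ∃ r, 0 < r ∧ Metric.ball 0 r ⊆ A := by
  obtain ⟨x, r, hr, hball⟩ := exists_ball_subset_of_convex hA hpos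
  have hx : -x ∈ A := hsymm x (hball (Metric.mem_ball_self hr))
  have hmid : AffineMap.lineMap x (-x) (1 / 2 : ℝ) = 0 := by
    rw [AffineMap.lineMap_apply_module]; module
  have h := ball_lineMap_subset_of_convex (s := 1 / 2) hA hball hx (by norm_num) (by norm_num)
  rw [hmid] at h
  exact ⟨_, by linarith, h⟩

end ConvexBody

/-! ### John's theorem -/

section John

lemma exists_max_abs_det_mapsTo_closedBall {E : Type*} [NormedAddCommGroup E] [NormedSpace ℝ E]
    [FiniteDimensional ℝ E] {K : Set E} (hK : IsCompact K) {r : ℝ} (hr : 0 < r)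
    (hball : Metric.ball 0 r ⊆ K) :
    ∃ T : E →L[ℝ] E, T.det ≠ 0 ∧ Set.MapsTo T (Metric.closedBall 0 1) K ∧
      ∀ T' : E →L[ℝ] E, Set.MapsTo T' (Metric.closedBall 0 1) K → |T'.det| ≤ |T.det| := by
  set A : Set (E →L[ℝ] E) := {T | Set.MapsTo T (Metric.closedBall 0 1) K}
  have hclosed : IsClosed A := by
    simp only [A, Set.MapsTo, Set.ofPred_forall]
    exact isClosed_iInter fun v => isClosed_iInter fun _ => hK.isClosed.preimage (by fun_prop)
  obtain ⟨R, hR⟩ := hK.isBounded.exists_norm_le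
  have hR0 : 0 ≤ R := (norm_nonneg _).trans (hR 0 (hball (Metric.mem_ball_self hr)))
  have hbounded : Bornology.IsBounded A :=
    (Metric.isBounded_closedBall (x := 0) (r := R)).subset fun T hT =>
      mem_closedBall_zero_iff.2 <| ContinuousLinearMap.opNorm_le_of_unit_norm hR0 fun x hx =>
        hR _ (hT (mem_closedBall_zero_iff.2 hx.le))
  have hmem : (r / 2) • ContinuousLinearMap.id ℝ E ∈ A := fun v hv => hball <| by
    have hv1 : ‖v‖ ≤ 1 := mem_closedBall_zero_iff.1 hv
    rw [mem_ball_zero_iff, smul_apply, ContinuousLinearMap.id_apply,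
      norm_smul, Real.norm_of_nonneg (by positivity)]
    nlinarith
  obtain ⟨T, hTA, hTmax⟩ := (Metric.isCompact_of_isClosed_isBounded hclosed hbounded).exists_isMaxOn
    ⟨_, hmem⟩ ContinuousLinearMap.continuous_det.abs.continuousOn
  refine ⟨T, abs_pos.1 (lt_of_lt_of_le ?_ (hTmax hmem)), hTA, hTmax⟩
  have hdet : ((r / 2) • ContinuousLinearMap.id ℝ E).det = (r / 2) ^ Module.finrank ℝ E := by
    simp [ContinuousLinearMap.det]
  simp only [hdet]
  positivity

variable {E : Type*} [NormedAddCommGroup E] [InnerProductSpace ℝ E]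

/-- For a unit vector `e`, the symmetric map with eigenvalue `a` on the line spanned by `e` and
eigenvalue `b` on its orthogonal complement. -/
def stretch (b a : ℝ) (e : E) : E →L[ℝ] E :=
  b • ContinuousLinearMap.id ℝ E + (a - b) • (innerSL ℝ e).smulRight e

lemma stretch_apply (b a : ℝ) (e v : E) :
    stretch b a e v = b • v + ((a - b) * inner ℝ e v) • e := by
  simp [stretch, mul_smul]

lemma inner_stretch_right (b a : ℝ) (e v w : E) :
    inner ℝ w (stretch b a e v) = inner ℝ (stretch b a e w) v := by
  simp only [stretch_apply, inner_add_right, inner_add_left, real_inner_smul_right,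
    real_inner_smul_left, real_inner_comm e w]
  ring

lemma norm_stretch_sq (b a : ℝ) {e : E} (he : ‖e‖ = 1) (w : E) :
    ‖stretch b a e w‖ ^ 2 = b ^ 2 * ‖w‖ ^ 2 + (a ^ 2 - b ^ 2) * inner ℝ e w ^ 2 := by
  rw [stretch_apply, norm_add_sq_real, norm_smul, norm_smul, real_inner_smul_left,
    real_inner_smul_right, real_inner_comm e w, he, mul_pow, mul_pow, Real.norm_eq_abs,
    Real.norm_eq_abs, sq_abs, sq_abs]
  ring

lemma det_stretch [FiniteDimensional ℝ E] {b : ℝ} (hb : b ≠ 0) (a : ℝ) {e : E} (he : ‖e‖ = 1) :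
    (stretch b a e).det = b ^ (Module.finrank ℝ E - 1) * a := by
  have htransvection : (stretch b a e : E →ₗ[ℝ] E) =
      b • LinearMap.transvection (innerₛₗ ℝ e) ((a / b - 1) • e) := by
    ext v
    have hcoeff : b * (inner ℝ e v * (a / b - 1)) = (a - b) * inner ℝ e v := by
      field_simp
    simp only [ContinuousLinearMap.coe_coe, stretch_apply, LinearMap.smul_apply,
      LinearMap.transvection.apply, innerₛₗ_apply_apply, smul_add, smul_smul, hcoeff]
  have hfinrank : Module.finrank ℝ E - 1 + 1 = Module.finrank ℝ E := by
    have : Nontrivial E := ⟨e, 0, fun h => by simp [h] at he⟩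
    exact Nat.sub_add_cancel Module.finrank_pos
  rw [ContinuousLinearMap.det, htransvection, LinearMap.det_smul, LinearMap.transvection.det,
    innerₛₗ_apply_apply, real_inner_smul_right, real_inner_self_eq_norm_sq, he, ← hfinrank,
    pow_succ]
  simp only [Nat.add_sub_cancel]
  field_simp
  ring

/- If `⟪w, ·⟫ < u` on `C`, then `‖w‖ ≤ u` and `|⟪w, s • e⟫| < u`, whence
`‖stretch b a e w‖ ^ 2 = (1 - ε) * ‖w‖ ^ 2 + ε * ⟪w, s • e⟫ ^ 2 ≤ u ^ 2`: every half-space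
containing `C` contains the stretched ball. -/
lemma mapsTo_stretch_closedBall [CompleteSpace E] {C : Set E} (hC : Convex ℝ C)
    (hclosed : IsClosed C) (hball : Metric.closedBall 0 1 ⊆ C) {e : E} (he : ‖e‖ = 1)
    {s ε a b : ℝ} (hpos : s • e ∈ C) (hneg : -(s • e) ∈ C) (hε0 : 0 ≤ ε) (hε1 : ε ≤ 1)
    (hb : b ^ 2 = 1 - ε) (ha : a ^ 2 = 1 + (s ^ 2 - 1) * ε) :
    Set.MapsTo (stretch b a e) (Metric.closedBall 0 1) C := by
  intro v hv
  by_contra hnot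
  obtain ⟨φ, u, hφC, hφv⟩ := geometric_hahn_banach_closed_point hC hclosed hnot
  obtain ⟨w, rfl⟩ := (InnerProductSpace.toDual ℝ E).surjective φ
  simp only [InnerProductSpace.toDual_apply_apply] at hφC hφv
  have hle : |inner ℝ w (s • e)| ≤ u :=
    abs_le.2 ⟨by linarith [inner_neg_right (𝕜 := ℝ) w (s • e) ▸ hφC _ hneg], (hφC _ hpos).le⟩
  have hu : 0 ≤ u := (abs_nonneg _).trans hle
  have hw : ‖w‖ ≤ u := by
    rcases eq_or_ne w 0 with rfl | hw0
    · simpa using hu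
    have hunit : ‖w‖⁻¹ • w ∈ C := hball (by simp [norm_smul, hw0])
    have hlt := hφC _ hunit
    rw [real_inner_smul_right, real_inner_self_eq_norm_sq, sq,
      inv_mul_cancel_left₀ (norm_ne_zero_iff.2 hw0)] at hlt
    exact hlt.le
  have hstretch : ‖stretch b a e w‖ ≤ u := by
    rw [← pow_le_pow_iff_left₀ (norm_nonneg _) hu two_ne_zero]
    calc ‖stretch b a e w‖ ^ 2 = (1 - ε) * ‖w‖ ^ 2 + ε * inner ℝ w (s • e) ^ 2 := by
          rw [norm_stretch_sq b a he, ha, hb, real_inner_smul_right, real_inner_comm w e]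
          ring
      _ ≤ (1 - ε) * u ^ 2 + ε * u ^ 2 := by
          have hsq : inner ℝ w (s • e) ^ 2 ≤ u ^ 2 := sq_le_sq' (abs_le.1 hle).1 (abs_le.1 hle).2
          gcongr
      _ = u ^ 2 := by ring
  have hv1 : ‖v‖ ≤ 1 := mem_closedBall_zero_iff.1 hv
  refine hφv.not_ge ?_
  calc inner ℝ w (stretch b a e v) = inner ℝ (stretch b a e w) v := inner_stretch_right ..
    _ ≤ ‖stretch b a e w‖ * ‖v‖ := real_inner_le_norm _ _
    _ ≤ u * 1 := by gcongr
    _ = u := mul_one u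

/- The witness makes Bernoulli's lower bound `(1 - m * ε) * (1 + (P - 1) * ε)` exceed `1`. -/
lemma exists_one_lt_pow_mul {m : ℕ} {P : ℝ} (hP : m + 1 < P) :
    ∃ ε, 0 < ε ∧ ε < 1 ∧ 1 < (1 - ε) ^ m * (1 + (P - 1) * ε) := by
  have hP0 : 0 < P := lt_trans (by positivity) hP
  have hden : 0 < (m + 1) * P + 1 := by positivity
  set ε : ℝ := (P - (m + 1)) / ((m + 1) * P + 1) with hε
  have hεP : ε * ((m + 1) * P + 1) = P - (m + 1) := div_mul_cancel₀ _ hden.ne'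
  have hε0 : 0 < ε := div_pos (by linarith) hden
  have hε1 : ε < 1 := by rw [hε, div_lt_one hden]; nlinarith
  have hbernoulli : 1 - m * ε ≤ (1 - ε) ^ m := by
    simpa [sub_eq_add_neg] using one_add_mul_le_pow (a := -ε) (by linarith) m
  refine ⟨ε, hε0, hε1, ?_⟩
  calc 1 < 1 + ε * (ε * (P + m + 1)) := lt_add_of_pos_right _ (by positivity)
    _ = (1 - m * ε) * (1 + (P - 1) * ε) := by linear_combination ε * hεP
    _ ≤ (1 - ε) ^ m * (1 + (P - 1) * ε) := by
        gcongr
        nlinarith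

variable [FiniteDimensional ℝ E]

/-- **John's theorem** for symmetric convex bodies. -/
lemma exists_john_ellipsoid [Nontrivial E] {K : Set E} (hK : IsCompact K) (hconv : Convex ℝ K)
    (hsymm : ∀ x ∈ K, -x ∈ K) {r : ℝ} (hr : 0 < r) (hball : Metric.ball 0 r ⊆ K) :
    ∃ T : E →L[ℝ] E, T.det ≠ 0 ∧ Set.MapsTo T (Metric.closedBall 0 1) K ∧
      K ⊆ T '' Metric.closedBall 0 (√(Module.finrank ℝ E)) := by
  obtain ⟨T, hdet, hTK, hmax⟩ := exists_max_abs_det_mapsTo_closedBall hK hr hball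
  refine ⟨T, hdet, hTK, fun x hx => ?_⟩
  obtain ⟨y, rfl⟩ : ∃ y, T y = x :=
    ((T : E →ₗ[ℝ] E).equivOfDetNeZero hdet).surjective x
  refine ⟨y, mem_closedBall_zero_iff.2 ?_, rfl⟩
  by_contra! hy
  have hy0 : ‖y‖ ≠ 0 := ((Real.sqrt_nonneg _).trans_lt hy).ne'
  have hfinrank : ((Module.finrank ℝ E - 1 : ℕ) : ℝ) + 1 = Module.finrank ℝ E := by
    exact_mod_cast Nat.sub_add_cancel Module.finrank_pos
  obtain ⟨ε, hε0, hε1, hlt⟩ := exists_one_lt_pow_mul (m := Module.finrank ℝ E - 1)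
    (P := ‖y‖ ^ 2) (hfinrank ▸ Real.lt_sq_of_sqrt_lt hy)
  set b := √(1 - ε)
  set a := √(1 + (‖y‖ ^ 2 - 1) * ε)
  set e := ‖y‖⁻¹ • y
  have he : ‖e‖ = 1 := by simp [e, norm_smul, hy0]
  have hye : ‖y‖ • e = y := smul_inv_smul₀ hy0 y
  have hb0 : 0 < 1 - ε := sub_pos.2 hε1
  have ha0 : 0 < 1 + (‖y‖ ^ 2 - 1) * ε := by
    nlinarith [mul_nonneg (sq_nonneg ‖y‖) hε0.le]
  have hstretch := mapsTo_stretch_closedBall (s := ‖y‖) (hconv.linear_preimage (T : E →ₗ[ℝ] E))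
    (hK.isClosed.preimage T.continuous) hTK he (by simpa [hye] using hx)
    (by simpa [hye] using hsymm _ hx) hε0.le hε1.le (Real.sq_sqrt hb0.le) (Real.sq_sqrt ha0.le)
  have hle := hmax (T.comp (stretch b a e)) hstretch
  have hdet_comp : (T.comp (stretch b a e)).det = T.det * (b ^ (Module.finrank ℝ E - 1) * a) := by
    rw [← det_stretch (Real.sqrt_pos.2 hb0).ne' a he]
    exact LinearMap.det_comp _ _
  rw [hdet_comp, abs_mul, mul_le_iff_le_one_right (abs_pos.2 hdet), ← sq_le_one_iff_abs_le_one,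
    mul_pow, ← pow_mul, mul_comm _ 2, pow_mul, Real.sq_sqrt hb0.le, Real.sq_sqrt ha0.le] at hle
  exact hle.not_gt hlt

lemma det_adjoint (T : E →ₗ[ℝ] E) : (LinearMap.adjoint T).det = T.det := by
  let b := (stdOrthonormalBasis ℝ E).toBasis
  rw [← LinearMap.det_toMatrix b, ← LinearMap.det_toMatrix b, LinearMap.toMatrix_adjoint,
    Matrix.det_conjTranspose, star_trivial]

/- The principal axes of the ellipsoid `T '' closedBall 0 1` are the eigenvectors of `T ∘ T*`. -/
lemma exists_orthonormalBasis_forall_mem_image_closedBall {n : ℕ}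
    (hn : Module.finrank ℝ E = n) {T : E →ₗ[ℝ] E} (hT : T.det ≠ 0) :
    ∃ (u : OrthonormalBasis (Fin n) ℝ E) (σ : Fin n → ℝ), (∀ i, 0 < σ i) ∧ ∏ i, σ i = |T.det| ∧
      ∀ q : Fin n → ℝ, ∑ i, (q i / σ i) ^ 2 ≤ 1 → ∑ i, q i • u i ∈ T '' Metric.closedBall 0 1 := by
  set S := LinearMap.adjoint T
  set u := S.isSymmetric_adjoint_comp_self.eigenvectorBasis hn
  set σ : Fin n → ℝ := fun i => S.singularValues i
  have hprod : ∏ i, σ i = |T.det| := by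
    rw [← det_adjoint T, ← LinearMap.normDet_eq_abs_det, LinearMap.normDet_eq_prod_singularValues,
      hn, Fin.prod_univ_eq_prod_range]
  have hσ (i : Fin n) : 0 < σ i := by
    refine (S.singularValues_nonneg i).lt_of_ne' ?_
    exact Finset.prod_ne_zero_iff.1 (hprod ▸ abs_ne_zero.2 hT) i (Finset.mem_univ i)
  have hTS (i : Fin n) : T (S (u i)) = σ i ^ 2 • u i := by
    calc T (S (u i)) = (LinearMap.adjoint S ∘ₗ S) (u i) := by
          rw [LinearMap.comp_apply, LinearMap.adjoint_adjoint]
      _ = σ i ^ 2 • u i := by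
          rw [S.sq_singularValues_fin hn]
          exact S.isSymmetric_adjoint_comp_self.apply_eigenvectorBasis hn i
  refine ⟨u, σ, hσ, hprod, fun q hq => ?_⟩
  set z := ∑ i, (q i / σ i ^ 2) • u i with hz
  have hTSz : T (S z) = ∑ i, q i • u i := by
    simp only [hz, map_sum, map_smul, hTS, smul_smul]
    exact Finset.sum_congr rfl fun i _ => by rw [div_mul_cancel₀ _ (pow_pos (hσ i) 2).ne']
  refine ⟨S z, ?_, hTSz⟩
  rw [mem_closedBall_zero_iff, ← sq_le_one_iff₀ (norm_nonneg _), ← real_inner_self_eq_norm_sq,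
    LinearMap.adjoint_inner_right, hTSz, hz, u.orthonormal.inner_sum]
  refine hq.trans_eq' (Finset.sum_congr rfl fun i _ => ?_)
  rw [conj_trivial, div_pow]
  ring

variable [MeasurableSpace E] [BorelSpace E]

/- Chernoff's bound: the indicator of the ball is at most `exp (b * (r ^ 2 - ‖v‖ ^ 2))`. -/
lemma volume_closedBall_le_exp_mul {b : ℝ} (hb : 0 < b) (r : ℝ) :
    volume (Metric.closedBall (0 : E) r) ≤
      ENNReal.ofReal (Real.exp (b * r ^ 2) * (Real.pi / b) ^ (Module.finrank ℝ E / 2 : ℝ)) := by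
  have hgauss := GaussianFourier.integral_rexp_neg_mul_sq_norm (V := E) hb
  have hint : Integrable fun v : E => Real.exp (-b * ‖v‖ ^ 2) :=
    Integrable.of_integral_ne_zero (hgauss ▸ by positivity)
  calc volume (Metric.closedBall (0 : E) r)
      = ∫⁻ v, (Metric.closedBall (0 : E) r).indicator 1 v :=
        (lintegral_indicator_one measurableSet_closedBall).symm
    _ ≤ ∫⁻ v : E, ENNReal.ofReal (Real.exp (b * r ^ 2) * Real.exp (-b * ‖v‖ ^ 2)) := by
        refine lintegral_mono (Set.indicator_le fun v hv => ?_)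
        have hsq : ‖v‖ ^ 2 ≤ r ^ 2 := by
          gcongr
          exact mem_closedBall_zero_iff.1 hv
        rw [Pi.one_apply, ENNReal.one_le_ofReal, ← Real.exp_add, Real.one_le_exp_iff]
        nlinarith
    _ = ENNReal.ofReal (Real.exp (b * r ^ 2) * (Real.pi / b) ^ (Module.finrank ℝ E / 2 : ℝ)) := by
        rw [← ofReal_integral_eq_lintegral_ofReal (hint.const_mul _)
          (Filter.Eventually.of_forall fun v => by positivity), integral_const_mul, hgauss]

lemma volume_closedBall_sqrt_finrank_le {n : ℕ} (hn : Module.finrank ℝ E = n) :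
    volume (Metric.closedBall (0 : E) (√n)) ≤
      ENNReal.ofReal (√(2 * Real.pi * Real.exp 1) ^ n) := by
  refine (volume_closedBall_le_exp_mul one_half_pos _).trans_eq ?_
  rw [hn, Real.sq_sqrt n.cast_nonneg, Real.sqrt_eq_rpow, ← Real.rpow_mul_natCast (by positivity),
    Real.mul_rpow (by positivity) (by positivity), ← Real.exp_mul, mul_comm]
  congr 3 <;> ring

lemma exists_box_subset_of_symmetric_convex {n : ℕ} (hn : Module.finrank ℝ E = n) (hn0 : n ≠ 0)
    {K : Set E} (hK : IsCompact K) (hconv : Convex ℝ K) (hsymm : ∀ x ∈ K, -x ∈ K) {r : ℝ}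
    (hr : 0 < r) (hball : Metric.ball 0 r ⊆ K) :
    ∃ (u : OrthonormalBasis (Fin n) ℝ E) (a : Fin n → ℝ), (∀ i, 0 < a i) ∧
      (∀ q : Fin n → ℝ, (∀ i, |q i| ≤ a i) → ∑ i, q i • u i ∈ K) ∧
      volume K ≤
        ENNReal.ofReal ((√(2 * Real.pi * Real.exp 1 * n) / 2) ^ n * ∏ i, (2 * a i)) := by
  have : Nontrivial E := Module.nontrivial_of_finrank_pos (R := ℝ) (by omega)
  obtain ⟨T, hdet, hTK, hKT⟩ := exists_john_ellipsoid hK hconv hsymm hr hball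
  obtain ⟨u, σ, hσ, hprod, haxes⟩ :=
    exists_orthonormalBasis_forall_mem_image_closedBall hn (T := T) hdet
  have hsqrt : 0 < √(n : ℝ) := Real.sqrt_pos.2 (mod_cast Nat.pos_of_ne_zero hn0)
  refine ⟨u, fun i => σ i / √n, fun i => div_pos (hσ i) hsqrt, fun q hq => ?_, ?_⟩
  · refine hTK.image_subset (haxes q ?_)
    calc ∑ i, (q i / σ i) ^ 2 ≤ ∑ _i : Fin n, (1 / √n) ^ 2 := by
          refine Finset.sum_le_sum fun i _ => sq_le_sq.2 ?_
          rw [abs_div, abs_of_pos (hσ i), abs_of_pos (one_div_pos.2 hsqrt),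
            div_le_div_iff₀ (hσ i) hsqrt, one_mul]
          exact (le_div_iff₀ hsqrt).1 (hq i)
      _ = 1 := by simp [hn0]
  · have hscale : ∏ i, 2 * (σ i / √n) = |T.det| * (2 / √n) ^ n := by
      rw [ContinuousLinearMap.det, ← hprod, ← Fin.prod_const, ← Finset.prod_mul_distrib]
      exact Finset.prod_congr rfl fun i _ => by ring
    calc volume K ≤ volume (T '' Metric.closedBall 0 (√n)) := measure_mono (hn ▸ hKT)
      _ ≤ ENNReal.ofReal |T.det| * ENNReal.ofReal (√(2 * Real.pi * Real.exp 1) ^ n) := by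
          rw [Measure.addHaar_image_continuousLinearMap]
          gcongr
          exact volume_closedBall_sqrt_finrank_le hn
      _ = _ := by
          rw [hscale, ← ENNReal.ofReal_mul (abs_nonneg _), Real.sqrt_mul (by positivity) (n : ℝ),
            mul_left_comm, ← mul_pow]
          congr 3
          field_simp

end John

/-! ### Log-concave functions -/

section LogConcave

variable {n : ℕ} {f : Eucl n → ℝ}

lemma IsLogConcave.convex_superlevel (hf : IsLogConcave f) (h0 : ∀ x, 0 ≤ f x) {t : ℝ}
    (ht : 0 ≤ t) : Convex ℝ {x | t ≤ f x} := by
  refine convex_iff_forall_pos.2 fun x hx y hy a b ha hb hab => ?_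
  obtain rfl : b = 1 - a := eq_sub_of_add_eq' hab
  calc t = t ^ a * t ^ (1 - a) := by
        rw [← Real.rpow_add_of_nonneg ht ha.le hb.le, hab, Real.rpow_one]
    _ ≤ f x ^ a * f y ^ (1 - a) :=
        mul_le_mul (Real.rpow_le_rpow ht hx ha.le) (Real.rpow_le_rpow ht hy hb.le)
          (Real.rpow_nonneg ht _) (Real.rpow_nonneg (h0 x) _)
    _ ≤ f (a • x + (1 - a) • y) := hf x y a ha (by linarith)

lemma IsLogConcave.mul_le_sq_midpoint (hf : IsLogConcave f) (h0 : ∀ x, 0 ≤ f x) (x y : Eucl n) :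
    f x * f y ≤ f ((2⁻¹ : ℝ) • x + (2⁻¹ : ℝ) • y) ^ 2 := by
  have h := hf x y 2⁻¹ (by norm_num) (by norm_num)
  rw [show (1 : ℝ) - 2⁻¹ = 2⁻¹ by norm_num, ← Real.mul_rpow (h0 x) (h0 y), inv_eq_one_div,
    ← Real.sqrt_eq_rpow] at h
  rw [inv_eq_one_div]
  exact (Real.sqrt_le_left (h0 _)).1 h

namespace MemQ0

lemma isClosed_superlevel (hf : MemQ0 f) (t : ℝ) : IsClosed {x | t ≤ f x} :=
  hf.2.2.1.isClosed_preimage t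

lemma volume_superlevel_ne_top (hf : MemQ0 f) {t : ℝ} (ht : 0 < t) : volume {x | t ≤ f x} ≠ ∞ :=
  (hf.2.2.2.1.measure_ge_lt_top ht).ne

lemma exists_volume_superlevel_ne_zero (hf : MemQ0 f) :
    ∃ t, 0 < t ∧ volume {x | t ≤ f x} ≠ 0 := by
  by_contra! hzero
  have hpos := (integral_pos_iff_support_of_nonneg hf.1 hf.2.2.2.1).1 hf.2.2.2.2
  refine hpos.ne' (measure_mono_null (t := ⋃ j : ℕ, {x | 1 / ((j : ℝ) + 1) ≤ f x}) ?_
    (measure_iUnion_null fun j => hzero _ (by positivity)))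
  intro x hx
  obtain ⟨j, hj⟩ := exists_nat_one_div_lt ((hf.1 x).lt_of_ne' hx)
  exact Set.mem_iUnion.2 ⟨j, hj.le⟩

lemma exists_ball_subset_superlevel (hf : MemQ0 f) :
    ∃ t x r, 0 < t ∧ 0 < r ∧ Metric.ball x r ⊆ {x | t ≤ f x} := by
  obtain ⟨t, ht, hvol⟩ := hf.exists_volume_superlevel_ne_zero
  obtain ⟨x, r, hr, hball⟩ := exists_ball_subset_of_convex (μ := volume)
    (hf.2.1.convex_superlevel hf.1 ht.le) hvol
  exact ⟨t, x, r, ht, hr, hball⟩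

lemma isCompact_superlevel (hf : MemQ0 f) {t : ℝ} (ht : 0 < t) : IsCompact {x | t ≤ f x} := by
  obtain ⟨s, hs, hvol⟩ := hf.exists_volume_superlevel_ne_zero
  have hmin : 0 < min s t := lt_min hs ht
  have hbdd : Bornology.IsBounded {x | min s t ≤ f x} :=
    isBounded_of_convex (hf.2.1.convex_superlevel hf.1 hmin.le)
      (fun h => hvol (measure_mono_null (fun x hx => (min_le_left s t).trans hx) h))
      (hf.volume_superlevel_ne_top hmin)
  exact Metric.isCompact_of_isClosed_isBounded (hf.isClosed_superlevel t)
    (hbdd.subset fun x hx => (min_le_right s t).trans hx)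

lemma exists_forall_le (hf : MemQ0 f) : ∃ x₀, 0 < f x₀ ∧ ∀ x, f x ≤ f x₀ := by
  obtain ⟨t, ht, hvol⟩ := hf.exists_volume_superlevel_ne_zero
  obtain ⟨x₀, hx₀, hmax⟩ := (hf.2.2.1.upperSemicontinuousOn {x | t ≤ f x}).exists_isMaxOn
    (nonempty_of_measure_ne_zero hvol) (hf.isCompact_superlevel ht)
  refine ⟨x₀, ht.trans_le hx₀, fun x => ?_⟩
  rcases le_or_gt t (f x) with hx | hx
  · exact hmax hx
  · exact hx.le.trans hx₀

end MemQ0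

lemma integral_comp_smul_add {E F : Type*} [NormedAddCommGroup E] [NormedSpace ℝ E]
    [MeasurableSpace E] [BorelSpace E] [FiniteDimensional ℝ E] [NormedAddCommGroup F]
    [NormedSpace ℝ F] (μ : Measure E) [μ.IsAddHaarMeasure] (g : E → F) (r : ℝ) (c : E) :
    ∫ x, g (r • x + c) ∂μ = |(r ^ Module.finrank ℝ E)⁻¹| • ∫ x, g x ∂μ := by
  rw [Measure.integral_comp_smul μ (fun x => g (x + c)), integral_add_right_eq_self]

/- Off the superlevel set `L`, log-concavity along the segment from `x` to the maximum point `x₀`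
gives `f x * f x₀ ≤ f m ^ 2` at the midpoint `m`. -/
lemma MemQ0.le_indicator_add_midpoint (hf : MemQ0 f) {x₀ : Eucl n} (hpos : 0 < f x₀)
    (hmax : ∀ x, f x ≤ f x₀) {δ : ℝ} (hδ : 0 < δ) (x : Eucl n) :
    let L := {x | δ * f x₀ ≤ f x}
    let m := (2⁻¹ : ℝ) • x + (2⁻¹ : ℝ) • x₀
    f x ≤ L.indicator (fun _ => f x₀) x + δ * (L.indicator (fun _ => f x₀) m + f m) := by
  intro L m
  have hm0 : 0 ≤ f m := hf.1 m
  by_cases hx : x ∈ L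
  · rw [Set.indicator_of_mem hx]
    have hind : 0 ≤ L.indicator (fun _ => f x₀) m := Set.indicator_nonneg (fun _ _ => hpos.le) m
    exact (hmax x).trans (le_add_of_nonneg_right (by positivity))
  have hx' : f x < δ * f x₀ := not_le.1 hx
  rw [Set.indicator_of_notMem hx, zero_add]
  by_cases hm : m ∈ L
  · rw [Set.indicator_of_mem hm, mul_add]
    exact hx'.le.trans (le_add_of_nonneg_right (by positivity))
  · rw [Set.indicator_of_notMem hm, zero_add]
    have hm' : f m < δ * f x₀ := not_le.1 hm
    refine le_of_mul_le_mul_right ?_ hpos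
    calc f x * f x₀ ≤ f m ^ 2 := hf.2.1.mul_le_sq_midpoint hf.1 x x₀
      _ = f m * f m := sq _
      _ ≤ f m * (δ * f x₀) := by gcongr
      _ = δ * f m * f x₀ := by ring

lemma MemQ0.one_sub_mul_integral_le (hf : MemQ0 f) {x₀ : Eucl n} (hpos : 0 < f x₀)
    (hmax : ∀ x, f x ≤ f x₀) {δ : ℝ} (hδ : 0 < δ) :
    (1 - 2 ^ n * δ) * ∫ x, f x ≤
      (1 + 2 ^ n * δ) * (f x₀ * volume.real {x | δ * f x₀ ≤ f x}) := by
  set L := {x | δ * f x₀ ≤ f x}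
  have hL : MeasurableSet L := (hf.isClosed_superlevel _).measurableSet
  have hind : Integrable (L.indicator fun _ => f x₀) :=
    (integrable_indicator_iff hL).2
      (integrableOn_const (hf.volume_superlevel_ne_top (mul_pos hδ hpos)))
  have hsum : Integrable fun x => L.indicator (fun _ => f x₀) x + f x := hind.add hf.2.2.2.1
  have hcomp : Integrable fun x =>
      δ * (L.indicator (fun _ => f x₀) ((2⁻¹ : ℝ) • x + (2⁻¹ : ℝ) • x₀) +
        f ((2⁻¹ : ℝ) • x + (2⁻¹ : ℝ) • x₀)) :=
    ((hsum.comp_add_right _).comp_smul (inv_ne_zero two_ne_zero)).const_mul δ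
  have hle : ∫ x, f x ≤ f x₀ * volume.real L +
      δ * (2 ^ n * (f x₀ * volume.real L + ∫ x, f x)) := by
    calc ∫ x, f x ≤ ∫ x, (L.indicator (fun _ => f x₀) x +
          δ * (L.indicator (fun _ => f x₀) ((2⁻¹ : ℝ) • x + (2⁻¹ : ℝ) • x₀) +
            f ((2⁻¹ : ℝ) • x + (2⁻¹ : ℝ) • x₀))) :=
          integral_mono hf.2.2.2.1 (hind.add hcomp)
            (hf.le_indicator_add_midpoint hpos hmax hδ)
      _ = _ := by
          rw [integral_add hind hcomp, integral_const_mul,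
            integral_comp_smul_add volume (fun x => L.indicator (fun _ => f x₀) x + f x),
            integral_add hind hf.2.2.2.1, integral_indicator_const _ hL, finrank_euclideanSpace_fin,
            abs_of_pos (by positivity), inv_pow, inv_inv, smul_eq_mul, smul_eq_mul, mul_comm (f x₀)]
  linarith

lemma MemQ0.integral_le_volume_superlevel (hf : MemQ0 f) (hn : 2 ≤ n) {x₀ : Eucl n}
    (hpos : 0 < f x₀) (hmax : ∀ x, f x ≤ f x₀) :
    ∫ x, f x ≤ 5 / 3 * (f x₀ * volume.real {x | (4⁻¹ : ℝ) ^ n * f x₀ ≤ f x}) := by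
  have hle := hf.one_sub_mul_integral_le hpos hmax (δ := (4⁻¹ : ℝ) ^ n) (by positivity)
  have hδ : (2 : ℝ) ^ n * 4⁻¹ ^ n ≤ 1 / 4 := by
    calc (2 : ℝ) ^ n * 4⁻¹ ^ n = 2⁻¹ ^ n := by rw [← mul_pow]; norm_num
      _ ≤ 2⁻¹ ^ 2 := pow_le_pow_of_le_one (by norm_num) (by norm_num) hn
      _ = 1 / 4 := by norm_num
  have hint := hf.2.2.2.2
  have hvol : 0 ≤ f x₀ * volume.real {x | (4⁻¹ : ℝ) ^ n * f x₀ ≤ f x} :=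
    mul_nonneg hpos.le measureReal_nonneg
  nlinarith

lemma MemQ0.exists_box_superlevel (hf : MemQ0 f) (hn : 2 ≤ n) {x₀ : Eucl n} (hpos : 0 < f x₀)
    (hmax : ∀ x, f x ≤ f x₀) :
    ∃ (u : OrthonormalBasis (Fin n) ℝ (Eucl n)) (a : Fin n → ℝ) (c : Eucl n), (∀ i, 0 < a i) ∧
      (∀ q : Fin n → ℝ, (∀ i, |q i| ≤ a i) → (4⁻¹ : ℝ) ^ n * f x₀ ≤ f (c + ∑ i, q i • u i)) ∧
      ∫ x, f x ≤
        5 / 3 * (f x₀ * (√(2 * Real.pi * Real.exp 1 * n) ^ n * ∏ i, (2 * a i))) := by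
  have hint := hf.integral_le_volume_superlevel hn hpos hmax
  have hlevel : 0 < (4⁻¹ : ℝ) ^ n * f x₀ := by positivity
  set L := {x | (4⁻¹ : ℝ) ^ n * f x₀ ≤ f x}
  have hL : IsCompact L := hf.isCompact_superlevel hlevel
  have hconv : Convex ℝ L := hf.2.1.convex_superlevel hf.1 hlevel.le
  have hL0 : volume L ≠ 0 := fun h => by
    simp only [measureReal_def, h, ENNReal.toReal_zero, mul_zero] at hint
    exact hint.not_gt hf.2.2.2.2
  obtain ⟨c, hc⟩ := exists_measure_le_mul_measure_symmetricPart (μ := volume)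
    hL.measurableSet hconv hL0 hL.measure_ne_top
  set K := symmetricPart L c
  have hK0 : volume K ≠ 0 := fun h => hL0 (by simpa [h] using hc)
  have hKconv : Convex ℝ K := convex_symmetricPart hconv c
  have hKclosed : IsClosed K := isClosed_symmetricPart hL.isClosed c
  have hKbdd : Bornology.IsBounded K :=
    ((Homeomorph.addLeft c).isCompact_preimage.2 hL).isBounded.subset fun v hv => hv.1
  obtain ⟨r, hr, hball⟩ := exists_ball_zero_subset_of_convex hKconv hK0
    fun v hv => neg_mem_symmetricPart hv
  obtain ⟨u, a, ha, hbox, hvol⟩ := exists_box_subset_of_symmetric_convex finrank_euclideanSpace_fin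
    (by omega) (Metric.isCompact_of_isClosed_isBounded hKclosed hKbdd) hKconv
    (fun v hv => neg_mem_symmetricPart hv) hr hball
  refine ⟨u, a, c, ha, fun q hq => (hbox q hq).1, hint.trans ?_⟩
  have hprod : 0 ≤ ∏ i, 2 * a i := Finset.prod_nonneg fun i _ => by linarith [ha i]
  gcongr
  refine ENNReal.toReal_le_of_le_ofReal (by positivity) (hc.trans ?_)
  calc 2 ^ Module.finrank ℝ (Eucl n) * volume K
      ≤ ENNReal.ofReal (2 ^ n) *
        ENNReal.ofReal ((√(2 * Real.pi * Real.exp 1 * n) / 2) ^ n * ∏ i, 2 * a i) := by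
        rw [finrank_euclideanSpace_fin, ENNReal.ofReal_pow zero_le_two, ENNReal.ofReal_ofNat]
        gcongr
    _ = ENNReal.ofReal (√(2 * Real.pi * Real.exp 1 * n) ^ n * ∏ i, 2 * a i) := by
        rw [← ENNReal.ofReal_mul (by positivity), ← mul_assoc, ← mul_pow, mul_div_cancel₀]
        exact two_ne_zero

end LogConcave


/-! ### Orthonormal coordinates -/

section Coordinates

variable {ι V : Type*} [Fintype ι] [NormedAddCommGroup V] [InnerProductSpace ℝ V]

/-- The vector with given coordinates in an orthonormal basis, as a linear equivalence from the
bare product space `ι → ℝ`, on which coordinate projections are defined. -/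
def ofCoords (u : OrthonormalBasis ι ℝ V) : (ι → ℝ) ≃ₗ[ℝ] V :=
  u.toBasis.equivFun.symm

variable (u : OrthonormalBasis ι ℝ V)

lemma ofCoords_apply (x : ι → ℝ) : ofCoords u x = ∑ i, x i • u i := by
  simpa [ofCoords] using (u.sum_repr_symm (WithLp.toLp 2 x)).symm

lemma inner_ofCoords (i : ι) (x : ι → ℝ) : inner ℝ (u i) (ofCoords u x) = x i := by
  rw [ofCoords_apply, u.orthonormal.inner_right_fintype]

lemma norm_ofCoords_le (x : ι → ℝ) : ‖ofCoords u x‖ ≤ ∑ i, |x i| := by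
  rw [ofCoords_apply]
  refine (norm_sum_le _ _).trans_eq (Finset.sum_congr rfl fun i _ => ?_)
  rw [norm_smul, u.norm_eq_one, mul_one, Real.norm_eq_abs]

section Measure

variable [MeasurableSpace V] [BorelSpace V]

lemma measurePreserving_ofCoords [FiniteDimensional ℝ V] : MeasurePreserving (ofCoords u) := by
  have heq : ⇑(ofCoords u) = u.repr.symm ∘ WithLp.toLp 2 :=
    funext fun x => (ofCoords_apply u x).trans (u.sum_repr_symm (WithLp.toLp 2 x))
  exact heq ▸ u.measurePreserving_repr_symm.comp (PiLp.volume_preserving_toLp ι)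

lemma measurableEmbedding_ofCoords : MeasurableEmbedding (ofCoords u) :=
  have : FiniteDimensional ℝ V := u.toBasis.finiteDimensional_of_finite
  (ofCoords u).toContinuousLinearEquiv.toHomeomorph.measurableEmbedding

end Measure

/-- The subspace spanned by the vectors `u i` with `i ∈ S`. -/
def coordSubspace (S : Finset ι) : Submodule ℝ V :=
  Submodule.span ℝ (u '' S)

lemma exists_orthonormalBasis_coordSubspace (S : Finset ι) :
    ∃ b : OrthonormalBasis S ℝ (coordSubspace u S), ∀ i, (b i : V) = u i := by
  classical
  rw [coordSubspace, ← Finset.coe_image]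
  exact ⟨OrthonormalBasis.span u.orthonormal S, OrthonormalBasis.span_apply u.orthonormal S⟩

lemma finrank_coordSubspace (S : Finset ι) : Module.finrank ℝ (coordSubspace u S) = S.card := by
  obtain ⟨b, -⟩ := exists_orthonormalBasis_coordSubspace u S
  rw [Module.finrank_eq_card_basis b.toBasis, Fintype.card_coe]

lemma ofCoords_mem_orthogonal_coordSubspace_iff {S : Finset ι} {x : ι → ℝ} :
    ofCoords u x ∈ (coordSubspace u S)ᗮ ↔ ∀ i ∈ S, x i = 0 := by
  rw [← Submodule.span_singleton_le_iff_mem, coordSubspace, ← Submodule.isOrtho_iff_le,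
    Submodule.isOrtho_comm, Submodule.isOrtho_span]
  simp [inner_ofCoords]

variable [DecidableEq ι]

lemma iSup_orthogonal_coordSubspace (S : Finset ι) (g : V → ℝ≥0∞) {x : ι → ℝ}
    (hx : ∀ i ∉ S, x i = 0) :
    ⨆ z : (coordSubspace u S)ᗮ, g (ofCoords u x + z) = coordProj S (g ∘ ofCoords u) x := by
  have hadd {z : ι → ℝ} (hz : ∀ i ∈ S, z i = 0) : S.piecewise x z = x + z := by
    ext i
    by_cases hi : i ∈ S <;> simp [hi, hx, hz]
  refine le_antisymm (iSup_le fun ⟨v, hv⟩ => ?_) (iSup_le fun z => ?_)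
  · obtain ⟨z, rfl⟩ := (ofCoords u).surjective v
    have hz := (ofCoords_mem_orthogonal_coordSubspace_iff u).1 hv
    simpa only [Function.comp_apply, hadd hz, map_add] using le_coordProj S (g ∘ ofCoords u) x z
  · have hz : ∀ i ∈ S, S.piecewise (0 : ι → ℝ) z i = 0 := fun i hi => S.piecewise_eq_of_mem _ z hi
    have heq : S.piecewise x z = x + S.piecewise (0 : ι → ℝ) z := by
      rw [← hadd hz, S.piecewise_idem_right]
    rw [Function.comp_apply, heq, map_add]
    exact le_iSup (fun v : (coordSubspace u S)ᗮ => g (ofCoords u x + v))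
      ⟨_, (ofCoords_mem_orthogonal_coordSubspace_iff u).2 hz⟩

lemma ofCoords_updateFinset {S : Finset ι} (b : OrthonormalBasis S ℝ (coordSubspace u S))
    (hb : ∀ i, (b i : V) = u i) (y : S → ℝ) :
    ofCoords u (Function.updateFinset 0 S y) = ofCoords b y := by
  rw [ofCoords_apply, ofCoords_apply, Submodule.coe_sum,
    ← Finset.sum_subset (Finset.subset_univ S) fun i _ hi => by simp [Function.updateFinset, hi],
    ← Finset.sum_coe_sort S]
  exact Finset.sum_congr rfl fun i _ => by simp [Function.updateFinset, hb]

end Coordinates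

section Measurability

lemma aemeasurable_of_convex_superlevel {E : Type*} [NormedAddCommGroup E] [NormedSpace ℝ E]
    [MeasurableSpace E] [BorelSpace E] [FiniteDimensional ℝ E] (μ : Measure E)
    [μ.IsAddHaarMeasure] {g : E → ℝ≥0∞} (hg : ∀ t, Convex ℝ {x | t < g x}) : AEMeasurable g μ := by
  have h : @Measurable (NullMeasurableSpace E μ) ℝ≥0∞ _ _ g :=
    measurable_of_Ioi fun t => (hg t).nullMeasurableSet μ
  exact NullMeasurable.aemeasurable h

variable {ι : Type*} [DecidableEq ι] {g : (ι → ℝ) → ℝ≥0∞}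

lemma convex_superlevel_coordProj (S : Finset ι) (hg : ∀ t, Convex ℝ {x | t < g x}) (t : ℝ≥0∞) :
    Convex ℝ {x | t < coordProj S g x} := by
  intro x hx y hy a b ha hb hab
  obtain ⟨z, hz⟩ := lt_iSup_iff.1 (Set.mem_ofPred.1 hx)
  obtain ⟨w, hw⟩ := lt_iSup_iff.1 (Set.mem_ofPred.1 hy)
  have heq : S.piecewise (a • x + b • y) (a • z + b • w) =
      a • S.piecewise x z + b • S.piecewise y w := by
    ext i
    by_cases hi : i ∈ S <;> simp [hi]
  have hlt : t < g (S.piecewise (a • x + b • y) (a • z + b • w)) :=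
    heq ▸ hg t hz hw ha hb hab
  exact hlt.trans_le (le_coordProj S g _ _)

lemma aemeasurable_coordProj_updateFinset (S : Finset ι) (hg : ∀ t, Convex ℝ {x | t < g x}) :
    AEMeasurable (fun y : S → ℝ => coordProj S g (Function.updateFinset 0 S y)) := by
  have hlin : IsLinearMap ℝ fun y : S → ℝ => Function.updateFinset (0 : ι → ℝ) S y := by
    constructor <;> intros <;> ext i <;> by_cases hi : i ∈ S <;>
      simp [Function.updateFinset, hi]
  exact aemeasurable_of_convex_superlevel volume fun t =>
    (convex_superlevel_coordProj S hg t).is_linear_preimage hlin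

end Measurability

section CoordFun

variable {n : ℕ} {f : Eucl n → ℝ} (u : OrthonormalBasis (Fin n) ℝ (Eucl n))

/-- The function `f` in the coordinates of the orthonormal basis `u`, with values in `ℝ≥0∞`. -/
def coordFun (u : OrthonormalBasis (Fin n) ℝ (Eucl n)) (f : Eucl n → ℝ) (x : Fin n → ℝ) : ℝ≥0∞ :=
  ENNReal.ofReal (f (ofCoords u x))

lemma MemQ0.lintegral_coordFun (hf : MemQ0 f) :
    ∫⁻ x, coordFun u f x = ENNReal.ofReal (∫ x, f x) := by
  rw [ofReal_integral_eq_lintegral_ofReal hf.2.2.2.1 (.of_forall hf.1)]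
  exact (measurePreserving_ofCoords u).lintegral_comp_emb (measurableEmbedding_ofCoords u)
    fun x => ENNReal.ofReal (f x)

lemma IsLogConcave.convex_superlevel_coordFun (hf : IsLogConcave f) (h0 : ∀ x, 0 ≤ f x)
    (t : ℝ≥0∞) : Convex ℝ {x | t < coordFun u f x} := by
  intro x hx y hy a b ha hb hab
  set s := min (f (ofCoords u x)) (f (ofCoords u y)) with hs
  have hmem : s ≤ f (a • ofCoords u x + b • ofCoords u y) :=
    hf.convex_superlevel h0 (le_min (h0 _) (h0 _)) (min_le_left _ _ : s ≤ f (ofCoords u x))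
      (min_le_right _ _ : s ≤ f (ofCoords u y)) ha hb hab
  rw [← map_smul, ← map_smul, ← map_add] at hmem
  have hts : t < ENNReal.ofReal s := by
    rw [hs, ENNReal.ofReal_min]
    exact lt_min hx hy
  exact hts.trans_le (ENNReal.ofReal_le_ofReal hmem)

lemma IsLogConcave.le_exp_mul (hf : IsLogConcave f) (h0 : ∀ x, 0 ≤ f x) {z w : Eucl n}
    {lam t : ℝ} (hlam : 0 ≤ lam) (ht : 0 < t) (hzw : Real.exp (-lam) * f z ≤ f w) :
    f z ≤ Real.exp (lam * t) * f ((1 + t)⁻¹ • (z + t • w)) := by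
  set s : ℝ := (1 + t)⁻¹ with hs
  have hs0 : 0 < s := by positivity
  have hs1 : s < 1 := inv_lt_one_of_one_lt₀ (by linarith)
  have hst : 1 - s = s * t := by rw [hs]; field_simp; ring
  have hfz : Real.exp (-lam * (1 - s)) * f z ≤ f (s • (z + t • w)) := by
    calc Real.exp (-lam * (1 - s)) * f z = f z ^ s * (Real.exp (-lam) * f z) ^ (1 - s) := by
          rw [Real.mul_rpow (Real.exp_pos _).le (h0 z), ← Real.exp_mul, mul_left_comm,
            ← Real.rpow_add_of_nonneg (h0 z) hs0.le (by linarith), add_sub_cancel, Real.rpow_one]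
      _ ≤ f z ^ s * f w ^ (1 - s) := by
          have := h0 z
          gcongr
      _ ≤ f (s • (z + t • w)) := by
          rw [smul_add, smul_smul, ← hst]
          exact hf z w s hs0 hs1
  calc f z = Real.exp (lam * (1 - s)) * (Real.exp (-lam * (1 - s)) * f z) := by
        rw [← mul_assoc, ← Real.exp_add, neg_mul, add_neg_cancel, Real.exp_zero, one_mul]
    _ ≤ Real.exp (lam * t) * f (s • (z + t • w)) := by
        have := h0 z
        gcongr
        rw [hst]
        exact mul_le_of_le_one_left ht.le hs1.le

lemma IsLogConcave.dilationBound_coordFun (hf : IsLogConcave f) (h0 : ∀ x, 0 ≤ f x) {M : ℝ}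
    (hM : ∀ x, f x ≤ M) {B : Set (Fin n → ℝ)} {c : Fin n → ℝ} {lam : ℝ} (hlam : 0 ≤ lam)
    (hB : ∀ b ∈ B, Real.exp (-lam) * M ≤ f (ofCoords u (c - b))) :
    DilationBound B c lam (coordFun u f) := by
  intro t ht b hb x
  have hle := hf.le_exp_mul h0 hlam ht
    ((mul_le_mul_of_nonneg_left (hM (ofCoords u (x + t • b))) (Real.exp_pos _).le).trans (hB b hb))
  rw [← map_smul, ← map_add, ← map_smul,
    show x + t • b + t • (c - b) = x + t • c by rw [smul_sub]; abel] at hle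
  rw [coordFun, coordFun, ← ENNReal.ofReal_mul (Real.exp_pos _).le]
  exact ENNReal.ofReal_le_ofReal hle

lemma MemQ0.exists_dilationBound_coordFun (hf : MemQ0 f) :
    ∃ (a c : Fin n → ℝ) (lam : ℝ), (∀ i, 0 < a i) ∧ 0 ≤ lam ∧
      DilationBound (Set.Icc (-a) a) c lam (coordFun u f) := by
  obtain ⟨x₀, hpos, hmax⟩ := hf.exists_forall_le
  obtain ⟨t, x, r, ht, hr, hball⟩ := hf.exists_ball_subset_superlevel
  obtain ⟨c, rfl⟩ := (ofCoords u).surjective x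
  have htM : t ≤ f x₀ := (hball (Metric.mem_ball_self hr)).trans (hmax _)
  refine ⟨fun _ => r / (n + 1), c, Real.log (f x₀ / t), fun _ => by positivity,
    Real.log_nonneg ((one_le_div ht).2 htM),
    hf.2.1.dilationBound_coordFun u hf.1 hmax (Real.log_nonneg ((one_le_div ht).2 htM)) ?_⟩
  intro b hb
  have hexp : Real.exp (-Real.log (f x₀ / t)) * f x₀ = t := by
    rw [Real.exp_neg, Real.exp_log (by positivity)]
    field_simp
  rw [hexp]
  refine hball ?_
  rw [map_sub, mem_ball_iff_norm, sub_sub_cancel_left, norm_neg]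
  calc ‖ofCoords u b‖ ≤ ∑ i, |b i| := norm_ofCoords_le u b
    _ ≤ ∑ _i : Fin n, r / (n + 1) := Finset.sum_le_sum fun i _ => abs_le.2 ⟨hb.1 i, hb.2 i⟩
    _ < r := by
        rw [Finset.sum_const, Finset.card_univ, Fintype.card_fin, nsmul_eq_mul, mul_div_assoc',
          div_lt_iff₀ (by positivity)]
        linarith

lemma MemQ0.projIntegral_coordFun_ne_top (hf : MemQ0 f) (S : Finset (Fin n)) :
    projIntegral S (coordFun u f) ≠ ∞ := by
  obtain ⟨a, c, lam, ha, hlam, hdil⟩ := hf.exists_dilationBound_coordFun u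
  have hbound := hdil.factorial_mul_weightedProjSum_le (d := S.card)
    (Nat.add_sub_cancel' S.card_le_univ) ha hlam
  rw [hf.lintegral_coordFun] at hbound
  have hfinite := ne_top_of_le_ne_top (by finiteness) hbound
  have hterm : (∏ i ∈ Sᶜ, ENNReal.ofReal (2 * a i)) * projIntegral S (coordFun u f) ≠ ∞ :=
    ENNReal.sum_ne_top.1 (ENNReal.lt_top_of_mul_ne_top_right hfinite
      (mod_cast Nat.factorial_ne_zero _)).ne S (by simp)
  refine (ENNReal.lt_top_of_mul_ne_top_right hterm (Finset.prod_ne_zero_iff.2 fun i _ => ?_)).ne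
  simpa using ha i

lemma MemQ0.projL1_coordSubspace (hf : MemQ0 f) (S : Finset (Fin n)) :
    projL1 f (coordSubspace u S) = (projIntegral S (coordFun u f)).toReal := by
  obtain ⟨x₀, -, hmax⟩ := hf.exists_forall_le
  obtain ⟨b, hb⟩ := exists_orthonormalBasis_coordSubspace u S
  have hfinite (y : S → ℝ) : coordProj S (coordFun u f) (Function.updateFinset 0 S y) < ∞ :=
    (iSup_le fun _ => ENNReal.ofReal_le_ofReal (hmax _)).trans_lt ENNReal.ofReal_lt_top
  rw [projIntegral_eq_lintegral, ← integral_toReal (aemeasurable_coordProj_updateFinset S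
    (hf.2.1.convex_superlevel_coordFun u hf.1)) (.of_forall hfinite), projL1,
    ← (measurePreserving_ofCoords b).integral_comp (measurableEmbedding_ofCoords b)]
  congr 1 with y
  have hsup := iSup_orthogonal_coordSubspace u S (fun v => ENNReal.ofReal (f v))
    (x := Function.updateFinset 0 S y) fun i hi => by simp [Function.updateFinset, hi]
  rw [ofCoords_updateFinset u b hb] at hsup
  have hcomp : coordFun u f = (fun v => ENNReal.ofReal (f v)) ∘ ofCoords u := rfl
  rw [hcomp, ← hsup, ENNReal.toReal_iSup fun _ => ENNReal.ofReal_ne_top]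
  simp only [ENNReal.toReal_ofReal (hf.1 _)]

lemma MemQ0.ofReal_projL1_coordSubspace (hf : MemQ0 f) (S : Finset (Fin n)) :
    ENNReal.ofReal (projL1 f (coordSubspace u S)) = projIntegral S (coordFun u f) := by
  rw [hf.projL1_coordSubspace, ENNReal.ofReal_toReal (hf.projIntegral_coordFun_ne_top u S)]

end CoordFun

/-! ### Means of projections -/

section MeanProj

variable {n : ℕ} {f : Eucl n → ℝ} (u : OrthonormalBasis (Fin n) ℝ (Eucl n))

/-- The geometric mean of the `L¹`-norms of the projections of `f` onto the `k`-dimensional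
coordinate subspaces of `u`. -/
def geomMeanProj (u : OrthonormalBasis (Fin n) ℝ (Eucl n)) (k : ℕ) (f : Eucl n → ℝ) : ℝ :=
  (∏ S ∈ Finset.powersetCard k Finset.univ, projL1 f (coordSubspace u S)) ^ (n.choose k : ℝ)⁻¹

lemma projL1_nonneg (h0 : ∀ x, 0 ≤ f x) (H : Submodule ℝ (Eucl n)) : 0 ≤ projL1 f H :=
  integral_nonneg fun _ => Real.iSup_nonneg fun _ => h0 _

lemma geomMeanProj_nonneg (h0 : ∀ x, 0 ≤ f x) (k : ℕ) : 0 ≤ geomMeanProj u k f :=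
  Real.rpow_nonneg (Finset.prod_nonneg fun _ _ => projL1_nonneg h0 _) _

lemma geomMeanProj_le_geomMeanProj {g : Eucl n → ℝ} (h0 : ∀ x, 0 ≤ f x) {k : ℕ}
    (hfg : ∀ H : Submodule ℝ (Eucl n), Module.finrank ℝ H = k → projL1 f H ≤ projL1 g H) :
    geomMeanProj u k f ≤ geomMeanProj u k g := by
  refine Real.rpow_le_rpow (Finset.prod_nonneg fun _ _ => projL1_nonneg h0 _)
    (Finset.prod_le_prod (fun _ _ => projL1_nonneg h0 _) fun S hS => hfg _ ?_) (by positivity)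
  rw [finrank_coordSubspace, (Finset.mem_powersetCard.1 hS).2]

lemma MemQ0.lintegral_rpow_le_geomMeanProj_rpow (hf : MemQ0 f) {k : ℕ} (hk : 1 ≤ k)
    (hkn : k ≤ n) :
    ∫⁻ x, ENNReal.ofReal (f x ^ ((n : ℝ) / k)) ≤
      ENNReal.ofReal (geomMeanProj u k f ^ ((n : ℝ) / k)) := by
  obtain ⟨j, rfl⟩ := Nat.exists_eq_add_of_le' hk
  have hproj (S : Finset (Fin n)) : 0 ≤ projL1 f (coordSubspace u S) := projL1_nonneg hf.1 _
  have hexp : (n.choose (j + 1) : ℝ)⁻¹ * ((n : ℝ) / (j + 1 : ℕ)) = ((n - 1).choose j : ℝ)⁻¹ := by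
    have hmul := Nat.add_one_mul_choose_eq (n - 1) j
    rw [Nat.sub_add_cancel (by omega)] at hmul
    have hmul' : (n : ℝ) * (n - 1).choose j = n.choose (j + 1) * (j + 1 : ℕ) := mod_cast hmul
    have h1 : ((n - 1).choose j : ℝ) ≠ 0 := mod_cast (Nat.choose_pos (by omega)).ne'
    have h2 : (n.choose (j + 1) : ℝ) ≠ 0 := mod_cast (Nat.choose_pos hkn).ne'
    field_simp
    exact hmul'
  have h := lintegral_rpow_le_prod_projIntegral_rpow (by rwa [Fintype.card_fin])
    fun S => aemeasurable_coordProj_updateFinset S (hf.2.1.convex_superlevel_coordFun u hf.1)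
  rw [Fintype.card_fin] at h
  calc ∫⁻ x, ENNReal.ofReal (f x ^ ((n : ℝ) / (j + 1 : ℕ)))
      = ∫⁻ x, coordFun u f x ^ ((n : ℝ) / (j + 1 : ℕ)) := by
        simp only [← ENNReal.ofReal_rpow_of_nonneg (hf.1 _)
          (by positivity : (0 : ℝ) ≤ n / (j + 1 : ℕ))]
        exact ((measurePreserving_ofCoords u).lintegral_comp_emb
          (measurableEmbedding_ofCoords u) _).symm
    _ ≤ _ := h
    _ = _ := by
        simp only [← hf.ofReal_projL1_coordSubspace]
        rw [ENNReal.prod_rpow_of_nonneg (by positivity),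
          ← ENNReal.ofReal_prod_of_nonneg fun S _ => hproj S, geomMeanProj,
          ← Real.rpow_mul (Finset.prod_nonneg fun S _ => hproj S), hexp,
          ENNReal.ofReal_rpow_of_nonneg (Finset.prod_nonneg fun S _ => hproj S) (by positivity)]

lemma IsLogConcave.rpow_mul_lintegral_le (hf : IsLogConcave f) (h0 : ∀ x, 0 ≤ f x) {p : ℝ}
    (hp : 1 < p) (x₀ : Eucl n) :
    ENNReal.ofReal (f x₀ ^ (p - 1)) * ∫⁻ x, ENNReal.ofReal (f x) ≤
      ENNReal.ofReal (p ^ n) * ∫⁻ x, ENNReal.ofReal (f x ^ p) := by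
  have hp0 : 0 < p := by linarith
  have hle (x : Eucl n) : f x₀ ^ (p - 1) * f x ≤ f (p⁻¹ • (x + (p - 1) • x₀)) ^ p := by
    have hsub : 1 - p⁻¹ = p⁻¹ * (p - 1) := by field_simp
    have hlc := hf x x₀ p⁻¹ (by positivity) (inv_lt_one_of_one_lt₀ hp)
    rw [hsub, mul_smul, ← smul_add] at hlc
    calc f x₀ ^ (p - 1) * f x = (f x ^ p⁻¹ * f x₀ ^ (p⁻¹ * (p - 1))) ^ p := by
          rw [Real.mul_rpow (Real.rpow_nonneg (h0 x) _) (Real.rpow_nonneg (h0 x₀) _),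
            ← Real.rpow_mul (h0 x), ← Real.rpow_mul (h0 x₀), inv_mul_cancel₀ hp0.ne',
            Real.rpow_one, mul_right_comm, inv_mul_cancel₀ hp0.ne', one_mul, mul_comm]
      _ ≤ _ := Real.rpow_le_rpow
          (mul_nonneg (Real.rpow_nonneg (h0 x) _) (Real.rpow_nonneg (h0 x₀) _)) hlc hp0.le
  have hdil := lintegral_comp_dilation volume (fun x => ENNReal.ofReal (f x ^ p)) x₀
    (sub_pos.2 hp)
  rw [add_sub_cancel, finrank_euclideanSpace_fin] at hdil
  rw [← hdil, ← lintegral_const_mul' _ _ ENNReal.ofReal_ne_top]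
  refine lintegral_mono fun x => ?_
  rw [← ENNReal.ofReal_mul (Real.rpow_nonneg (h0 x₀) _)]
  exact ENNReal.ofReal_le_ofReal (hle x)

lemma MemQ0.rpow_mul_rpow_le_geomMeanProj (hf : MemQ0 f) {k : ℕ} (hk : 1 ≤ k) (hkn : k < n)
    (x₀ : Eucl n) :
    (∫ x, f x) ^ ((k : ℝ) / n) * f x₀ ^ (((n : ℝ) - k) / n) ≤
      ((n : ℝ) / k) ^ k * geomMeanProj u k f := by
  have hk0 : (0 : ℝ) < k := mod_cast hk
  have hn0 : (0 : ℝ) < n := mod_cast hk.trans hkn.le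
  have hkn' : (k : ℝ) < n := mod_cast hkn
  have hint : 0 < ∫ x, f x := hf.2.2.2.2
  have hx₀ : 0 ≤ f x₀ := hf.1 x₀
  have hG := geomMeanProj_nonneg u hf.1 k
  set p : ℝ := (n : ℝ) / k with hp
  have hp0 : 0 < p := by positivity
  have hmain : f x₀ ^ (p - 1) * ∫ x, f x ≤ p ^ n * geomMeanProj u k f ^ p := by
    have h := (hf.2.1.rpow_mul_lintegral_le hf.1 ((one_lt_div hk0).2 hkn') x₀).trans
      (mul_le_mul_right (hf.lintegral_rpow_le_geomMeanProj_rpow u hk hkn.le) _)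
    rwa [← ofReal_integral_eq_lintegral_ofReal hf.2.2.2.1 (.of_forall hf.1),
      ← ENNReal.ofReal_mul (by positivity), ← ENNReal.ofReal_mul (by positivity),
      ENNReal.ofReal_le_ofReal_iff (by positivity)] at h
  rw [← Real.rpow_le_rpow_iff (by positivity) (by positivity) hp0,
    Real.mul_rpow (by positivity) (by positivity), Real.mul_rpow (by positivity) hG,
    ← Real.rpow_mul hint.le, ← Real.rpow_mul hx₀, ← Real.rpow_natCast p k, ← Real.rpow_mul hp0.le,
    show (k : ℝ) / n * p = 1 by rw [hp]; field_simp,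
    show ((n : ℝ) - k) / n * p = p - 1 by rw [hp]; field_simp,
    show k * p = n by rw [hp]; field_simp, Real.rpow_one, Real.rpow_natCast, mul_comm]
  exact hmain

end MeanProj

section AMGM

variable {ι : Type*} [Fintype ι] [DecidableEq ι]

lemma prod_powersetCard_prod_compl {M : Type*} [CommMonoid M] (k : ℕ) (b : ι → M) :
    ∏ S ∈ Finset.powersetCard k (Finset.univ : Finset ι), ∏ i ∈ Sᶜ, b i =
      (∏ i, b i) ^ (Fintype.card ι - 1).choose k := by
  rw [Finset.prod_comm' (t' := Finset.univ)
    (s' := fun i => Finset.powersetCard k (Finset.univ.erase i)), ← Finset.prod_pow]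
  · refine Finset.prod_congr rfl fun i _ => ?_
    rw [Finset.prod_const, Finset.card_powersetCard, Finset.card_erase_of_mem (Finset.mem_univ _),
      Finset.card_univ]
  · intro S i
    simp [Finset.mem_powersetCard, Finset.subset_erase, and_comm]

lemma choose_mul_geom_mean_le_sum_prod_compl {k m : ℕ} (hkm : k + m = Fintype.card ι)
    (hm : m ≠ 0) {b : ι → ℝ} (hb : ∀ i, 0 ≤ b i) {w : Finset ι → ℝ} (hw : ∀ S, 0 ≤ w S) :
    ((k + m).choose k : ℝ) * ((∏ i, b i) ^ ((m : ℝ) / (k + m : ℕ)) *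
      (∏ S ∈ Finset.powersetCard k Finset.univ, w S) ^ ((k + m).choose k : ℝ)⁻¹) ≤
    ∑ S ∈ Finset.powersetCard k Finset.univ, (∏ i ∈ Sᶜ, b i) * w S := by
  have hchoose : (0 : ℝ) < (k + m).choose k := mod_cast Nat.choose_pos (Nat.le_add_right k m)
  have hB : 0 ≤ ∏ i, b i := Finset.prod_nonneg fun i _ => hb i
  have hterm : ∀ S ∈ Finset.powersetCard k (Finset.univ : Finset ι), 0 ≤ (∏ i ∈ Sᶜ, b i) * w S :=
    fun S _ => mul_nonneg (Finset.prod_nonneg fun i _ => hb i) (hw S)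
  have hexp : ((k + m - 1).choose k : ℝ) * ((k + m).choose k : ℝ)⁻¹ = (m : ℝ) / (k + m : ℕ) := by
    have hmul := Nat.choose_mul_succ_eq (k + m - 1) k
    rw [Nat.sub_add_cancel (by omega), Nat.add_sub_cancel_left] at hmul
    rw [← div_eq_mul_inv, div_eq_div_iff hchoose.ne' (by positivity), mul_comm (m : ℝ)]
    exact_mod_cast hmul
  have h := Real.geom_mean_le_arith_mean_weighted (Finset.powersetCard k Finset.univ)
    (fun _ => ((k + m).choose k : ℝ)⁻¹) (fun S => (∏ i ∈ Sᶜ, b i) * w S)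
    (fun _ _ => inv_nonneg.2 hchoose.le)
    (by simp [← hkm, hchoose.ne']) hterm
  rwa [Real.finsetProd_rpow _ _ hterm, ← Finset.mul_sum, Finset.prod_mul_distrib,
    prod_powersetCard_prod_compl, ← hkm, Real.mul_rpow (pow_nonneg hB _)
    (Finset.prod_nonneg fun S _ => hw S), ← Real.rpow_natCast, ← Real.rpow_mul hB, hexp,
    le_inv_mul_iff₀ hchoose] at h

end AMGM

section Constants

lemma succ_pow_le_exp_mul_pow (n : ℕ) :
    ((n + 1 : ℕ) : ℝ) ^ n ≤ Real.exp 1 * (n : ℝ) ^ n := by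
  rcases n.eq_zero_or_pos with rfl | hn
  · simp
  have hn0 : (n : ℝ) ≠ 0 := mod_cast hn.ne'
  calc ((n + 1 : ℕ) : ℝ) ^ n = ((1 / (n : ℝ) + 1) * n) ^ n := by
        push_cast
        field_simp
        ring
    _ ≤ (Real.exp (1 / n) * n) ^ n := by
        gcongr
        exact Real.add_one_le_exp _
    _ = Real.exp 1 * (n : ℝ) ^ n := by
        rw [mul_pow, ← Real.exp_nat_mul, mul_one_div_cancel hn0]

lemma add_pow_mul_factorial_le (k m : ℕ) :
    ((k + m : ℕ) : ℝ) ^ (k + m) * k.factorial ≤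
      Real.exp 1 ^ m * ((k : ℝ) ^ k * (k + m).factorial) := by
  induction m with
  | zero => simp
  | succ m ih =>
    calc ((k + m + 1 : ℕ) : ℝ) ^ (k + m + 1) * k.factorial
        = ((k + m + 1 : ℕ) : ℝ) ^ (k + m) * ((k + m + 1 : ℕ) : ℝ) * k.factorial := by
          rw [pow_succ]
      _ ≤ Real.exp 1 * ((k + m : ℕ) : ℝ) ^ (k + m) * ((k + m + 1 : ℕ) : ℝ) * k.factorial := by
          gcongr
          exact succ_pow_le_exp_mul_pow (k + m)
      _ = Real.exp 1 * ((k + m + 1 : ℕ) : ℝ) * (((k + m : ℕ) : ℝ) ^ (k + m) * k.factorial) := by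
          ring
      _ ≤ Real.exp 1 * ((k + m + 1 : ℕ) : ℝ) *
          (Real.exp 1 ^ m * ((k : ℝ) ^ k * (k + m).factorial)) := by gcongr
      _ = Real.exp 1 ^ (m + 1) * ((k : ℝ) ^ k * (k + m + 1).factorial) := by
          rw [Nat.factorial_succ]
          push_cast
          ring

lemma div_pow_mul_pow_le_exp_mul_factorial_mul_choose {k : ℕ} (hk : k ≠ 0) (m : ℕ) :
    (((k + m : ℕ) : ℝ) / k) ^ k * ((k + m : ℕ) : ℝ) ^ m ≤
      Real.exp 1 ^ m * (m.factorial * (k + m).choose k) := by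
  have hchoose : (k.factorial : ℝ) * (m.factorial * (k + m).choose k) = (k + m).factorial := by
    have h := Nat.choose_mul_factorial_mul_factorial (Nat.le_add_right k m)
    rw [Nat.add_sub_cancel_left] at h
    rw [← h]
    push_cast
    ring
  have hk0 : (0 : ℝ) < (k : ℝ) ^ k := by positivity
  have h := add_pow_mul_factorial_le k m
  rw [← hchoose, pow_add] at h
  rw [div_pow, div_mul_eq_mul_div, div_le_iff₀ hk0]
  refine le_of_mul_le_mul_right (h.trans_eq ?_) (by positivity : (0 : ℝ) < k.factorial)
  ring

lemma one_add_log_four_mul_sqrt_mul_sqrt_le :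
    (1 + Real.log 4) * √(5 / 3) * √(2 * Real.pi * Real.exp 1) ≤ 16 := by
  have hlog : Real.log 4 ≤ 1.4 := by
    rw [show (4 : ℝ) = 2 ^ 2 by norm_num, Real.log_pow]
    have := Real.log_two_lt_d9
    norm_num
    linarith
  have hsqrt : √(5 / 3) ≤ 1.3 := (Real.sqrt_le_left (by norm_num)).2 (by norm_num)
  have hpi : √(2 * Real.pi * Real.exp 1) ≤ 4.2 := by
    refine (Real.sqrt_le_left (by norm_num)).2 ?_
    calc 2 * Real.pi * Real.exp 1 ≤ 2 * 3.15 * 2.72 := by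
          gcongr
          · exact Real.pi_lt_d2.le
          · linarith [Real.exp_one_lt_d9]
      _ ≤ 4.2 ^ 2 := by norm_num
  calc (1 + Real.log 4) * √(5 / 3) * √(2 * Real.pi * Real.exp 1)
      ≤ (1 + 1.4) * 1.3 * 4.2 := by gcongr
    _ ≤ 16 := by norm_num

lemma pow_mul_add_mul_log_four_mul_sqrt_pow_le {k m n : ℕ} (hkm : k + m = n) (hk : k ≠ 0)
    (hn : 2 ≤ n) :
    ((n : ℝ) / k) ^ k * (((n + n * Real.log 4) * √(2 * Real.pi * Real.exp 1 * n)) ^ m *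
        (5 / 3 : ℝ) ^ ((m : ℝ) / n)) ≤
      (16 * Real.exp 1 * √n) ^ m * (m.factorial * n.choose k) := by
  have hn2 : (2 : ℝ) ≤ n := mod_cast hn
  have hpow : (5 / 3 : ℝ) ^ ((m : ℝ) / n) ≤ √(5 / 3) ^ m := by
    rw [Real.sqrt_eq_rpow, ← Real.rpow_natCast, ← Real.rpow_mul (by norm_num),
      one_div_mul_eq_div]
    gcongr
    norm_num
  calc ((n : ℝ) / k) ^ k * (((n + n * Real.log 4) * √(2 * Real.pi * Real.exp 1 * n)) ^ m *
        (5 / 3 : ℝ) ^ ((m : ℝ) / n))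
      ≤ ((n : ℝ) / k) ^ k * (((n + n * Real.log 4) * √(2 * Real.pi * Real.exp 1 * n)) ^ m *
        √(5 / 3) ^ m) := by gcongr
    _ = (((n : ℝ) / k) ^ k * (n : ℝ) ^ m) *
        (((1 + Real.log 4) * √(5 / 3) * √(2 * Real.pi * Real.exp 1)) ^ m * √n ^ m) := by
        rw [Real.sqrt_mul (by positivity), ← mul_one_add]
        simp only [mul_pow]
        ring
    _ ≤ (Real.exp 1 ^ m * (m.factorial * n.choose k)) * (16 ^ m * √n ^ m) := by
        have hchoose := div_pow_mul_pow_le_exp_mul_factorial_mul_choose hk m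
        rw [hkm] at hchoose
        exact mul_le_mul hchoose (mul_le_mul_of_nonneg_right
          (pow_le_pow_left₀ (by positivity) one_add_log_four_mul_sqrt_mul_sqrt_le m)
          (by positivity)) (by positivity) (by positivity)
    _ = _ := by
        simp only [mul_pow]
        ring

end Constants

/-! ### The reverse bound in a suitable basis -/

section Lower

variable {n k m : ℕ} {f : Eucl n → ℝ} {u : OrthonormalBasis (Fin n) ℝ (Eucl n)}

lemma MemQ0.factorial_mul_choose_mul_geomMeanProj_le (hf : MemQ0 f) (hkm : k + m = n)
    (hm : m ≠ 0) {a c : Fin n → ℝ} (ha : ∀ i, 0 < a i) {lam : ℝ} (hlam : 0 ≤ lam)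
    (h : DilationBound (Set.Icc (-a) a) c lam (coordFun u f)) :
    m.factorial * n.choose k * ((∏ i, (2 * a i)) ^ ((m : ℝ) / n) * geomMeanProj u k f) ≤
      (n + lam) ^ m * ∫ x, f x := by
  have hw (S : Finset (Fin n)) : 0 ≤ projL1 f (coordSubspace u S) := projL1_nonneg hf.1 _
  have hb (i : Fin n) : 0 ≤ 2 * a i := mul_nonneg zero_le_two (ha i).le
  have hI : 0 < ∫ x, f x := hf.2.2.2.2
  have hmean := choose_mul_geom_mean_le_sum_prod_compl (by simpa using hkm) hm hb hw
  rw [hkm] at hmean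
  have hsum : weightedProjSum k a (coordFun u f) = ENNReal.ofReal
      (∑ S ∈ Finset.powersetCard k Finset.univ,
        (∏ i ∈ Sᶜ, (2 * a i)) * projL1 f (coordSubspace u S)) := by
    rw [weightedProjSum, ENNReal.ofReal_sum_of_nonneg fun S _ =>
      mul_nonneg (Finset.prod_nonneg fun i _ => hb i) (hw S)]
    refine Finset.sum_congr rfl fun S _ => ?_
    rw [ENNReal.ofReal_mul (Finset.prod_nonneg fun i _ => hb i),
      ENNReal.ofReal_prod_of_nonneg fun i _ => hb i, hf.ofReal_projL1_coordSubspace]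
  have hproj := h.factorial_mul_weightedProjSum_le (by simpa using hkm) ha hlam
  rw [hsum, hf.lintegral_coordFun, Fintype.card_fin, ← ENNReal.ofReal_natCast m.factorial,
    ← ENNReal.ofReal_mul (by positivity), ← ENNReal.ofReal_pow (by positivity),
    ← ENNReal.ofReal_mul (by positivity), ENNReal.ofReal_le_ofReal_iff (by positivity)] at hproj
  rw [mul_assoc]
  exact (mul_le_mul_of_nonneg_left hmean (by positivity)).trans hproj

lemma mul_le_of_rpow_mul_le_of_le_pow_mul {I M B G W C s : ℝ} (hI : 0 < I) (hM : 0 ≤ M)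
    (hB : 0 < B) (hs : 0 ≤ s) (hkm : k + m = n) (hn : n ≠ 0)
    (hG : W * (B ^ ((m : ℝ) / n) * G) ≤ C ^ m * I) (hC : 0 ≤ C)
    (hIB : I ≤ 5 / 3 * (M * (s ^ n * B))) :
    W * G ≤ (C * s) ^ m * (5 / 3) ^ ((m : ℝ) / n) *
      (I ^ ((k : ℝ) / n) * M ^ ((m : ℝ) / n)) := by
  have hn0 : (n : ℝ) ≠ 0 := mod_cast hn
  have hIsplit : I = I ^ ((k : ℝ) / n) * I ^ ((m : ℝ) / n) := by
    rw [← Real.rpow_add hI, ← add_div, ← Nat.cast_add, hkm, div_self hn0, Real.rpow_one]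
  have hspow : (s ^ n) ^ ((m : ℝ) / n) = s ^ m := by
    rw [← Real.rpow_natCast, ← Real.rpow_mul hs, mul_div_cancel₀ _ hn0, Real.rpow_natCast]
  have hIpow : I ^ ((m : ℝ) / n) ≤
      (5 / 3) ^ ((m : ℝ) / n) * (M ^ ((m : ℝ) / n) * (s ^ m * B ^ ((m : ℝ) / n))) := by
    rw [← hspow, ← Real.mul_rpow (by positivity) hB.le, ← Real.mul_rpow hM (by positivity),
      ← Real.mul_rpow (by norm_num) (by positivity)]
    exact Real.rpow_le_rpow hI.le hIB (by positivity)
  refine le_of_mul_le_mul_right ?_ (Real.rpow_pos_of_pos hB ((m : ℝ) / n))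
  calc W * G * B ^ ((m : ℝ) / n) = W * (B ^ ((m : ℝ) / n) * G) := by ring
    _ ≤ C ^ m * (I ^ ((k : ℝ) / n) * I ^ ((m : ℝ) / n)) := by rwa [← hIsplit]
    _ ≤ C ^ m * (I ^ ((k : ℝ) / n) * ((5 / 3) ^ ((m : ℝ) / n) *
        (M ^ ((m : ℝ) / n) * (s ^ m * B ^ ((m : ℝ) / n))))) := by gcongr
    _ = _ := by ring

lemma MemQ0.exists_dilationBound_Icc (hf : MemQ0 f) (hn : 2 ≤ n) {x₀ : Eucl n} (hpos : 0 < f x₀)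
    (hmax : ∀ x, f x ≤ f x₀) :
    ∃ (u : OrthonormalBasis (Fin n) ℝ (Eucl n)) (a c : Fin n → ℝ), (∀ i, 0 < a i) ∧
      DilationBound (Set.Icc (-a) a) c (n * Real.log 4) (coordFun u f) ∧
      ∫ x, f x ≤
        5 / 3 * (f x₀ * (√(2 * Real.pi * Real.exp 1 * n) ^ n * ∏ i, (2 * a i))) := by
  obtain ⟨u, a, c, ha, hbox, hint⟩ := hf.exists_box_superlevel hn hpos hmax
  obtain ⟨c, rfl⟩ := (ofCoords u).surjective c
  refine ⟨u, a, c, ha, hf.2.1.dilationBound_coordFun u hf.1 hmax (by positivity) ?_, hint⟩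
  intro b hb
  have hexp : Real.exp (-(n * Real.log 4)) = 4⁻¹ ^ n := by
    rw [← mul_neg, Real.exp_nat_mul, Real.exp_neg, Real.exp_log (by norm_num)]
  have hbox_b := hbox (-b) fun i => by
    rw [Pi.neg_apply, abs_neg]
    exact abs_le.2 ⟨hb.1 i, hb.2 i⟩
  rwa [hexp, sub_eq_add_neg, map_add, ofCoords_apply u (-b)]

lemma MemQ0.exists_geomMeanProj_le (hf : MemQ0 f) (hn : 2 ≤ n) (hk : 1 ≤ k) (hkn : k < n)
    {x₀ : Eucl n} (hpos : 0 < f x₀) (hmax : ∀ x, f x ≤ f x₀) :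
    ∃ u : OrthonormalBasis (Fin n) ℝ (Eucl n), ((n : ℝ) / k) ^ k * geomMeanProj u k f ≤
      (16 * Real.exp 1 * √n) ^ (n - k) *
        ((∫ x, f x) ^ ((k : ℝ) / n) * f x₀ ^ (((n : ℝ) - k) / n)) := by
  have hkm : k + (n - k) = n := by omega
  obtain ⟨u, a, c, ha, hdil, hint⟩ := hf.exists_dilationBound_Icc hn hpos hmax
  have hI : 0 < ∫ x, f x := hf.2.2.2.2
  have hB : 0 < ∏ i, (2 * a i) := Finset.prod_pos fun i _ => mul_pos two_pos (ha i)
  have hG := mul_le_of_rpow_mul_le_of_le_pow_mul hI hpos.le hB (Real.sqrt_nonneg _) hkm (by omega)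
    (hf.factorial_mul_choose_mul_geomMeanProj_le hkm (by omega) ha (by positivity) hdil)
    (by positivity) hint
  have hconst := pow_mul_add_mul_log_four_mul_sqrt_pow_le hkm (by omega) hn
  rw [Nat.cast_sub hkn.le] at hG hconst
  set W : ℝ := (n - k).factorial * n.choose k
  set D : ℝ := ((n + n * Real.log 4) * √(2 * Real.pi * Real.exp 1 * n)) ^ (n - k) *
    (5 / 3) ^ (((n : ℝ) - k) / n)
  set P : ℝ := (∫ x, f x) ^ ((k : ℝ) / n) * f x₀ ^ (((n : ℝ) - k) / n)
  have hW : 0 < W := by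
    have := Nat.choose_pos hkn.le
    positivity
  refine ⟨u, le_of_mul_le_mul_left ?_ hW⟩
  calc W * (((n : ℝ) / k) ^ k * geomMeanProj u k f)
      = ((n : ℝ) / k) ^ k * (W * geomMeanProj u k f) := by ring
    _ ≤ ((n : ℝ) / k) ^ k * (D * P) := by gcongr
    _ = ((n : ℝ) / k) ^ k * D * P := by ring
    _ ≤ (16 * Real.exp 1 * √n) ^ (n - k) * W * P := by gcongr
    _ = _ := by ring

lemma supNorm_eq_of_forall_le {x₀ : Eucl n} (hmax : ∀ x, f x ≤ f x₀) : supNorm f = f x₀ :=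
  le_antisymm (ciSup_le hmax) (le_ciSup ⟨_, Set.forall_mem_range.2 hmax⟩ x₀)

end Lower

/-- **The functional Shephard problem** (Corollary 4.8, second bound). -/
theorem functional_shephard_sup_int (n k : ℕ) (hn : 2 ≤ n) (hk1 : 1 ≤ k)
    (hk2 : k ≤ n - 1)
    (f₁ f₂ : Eucl n → ℝ) (hf₁ : MemQ0 f₁) (hf₂ : MemQ0 f₂)
    (hcond : ∀ H : Submodule ℝ (Eucl n), Module.finrank ℝ H = k →
      projL1 f₁ H ≤ projL1 f₂ H) :
    (∫ x, f₁ x) ^ ((k : ℝ) / n) * supNorm f₁ ^ (((n : ℝ) - k) / n) ≤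
      (16 * Real.exp 1 * Real.sqrt n) ^ (n - k) *
        ((∫ x, f₂ x) ^ ((k : ℝ) / n) * supNorm f₂ ^ (((n : ℝ) - k) / n)) := by
  have hkn : k < n := by omega
  obtain ⟨x₁, -, hmax₁⟩ := hf₁.exists_forall_le
  obtain ⟨x₂, hpos₂, hmax₂⟩ := hf₂.exists_forall_le
  rw [supNorm_eq_of_forall_le hmax₁, supNorm_eq_of_forall_le hmax₂]
  obtain ⟨u, hu⟩ := hf₂.exists_geomMeanProj_le hn hk1 hkn hpos₂ hmax₂
  calc (∫ x, f₁ x) ^ ((k : ℝ) / n) * f₁ x₁ ^ (((n : ℝ) - k) / n)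
      ≤ ((n : ℝ) / k) ^ k * geomMeanProj u k f₁ :=
        hf₁.rpow_mul_rpow_le_geomMeanProj u hk1 hkn x₁
    _ ≤ ((n : ℝ) / k) ^ k * geomMeanProj u k f₂ := by
        gcongr
        exact geomMeanProj_le_geomMeanProj u hf₁.1 hcond
    _ ≤ _ := hu
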